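/- Let n ≥ 2 and let Ω = ℝⁿ \ Ḡ, where G is a convex domain in ℝⁿ. If u = (u_1, …, u_n) is an n-component vector field with bounded harmonic components in Ω, then for every point x ∈ Ω, |div u(x)| ≤ (D_n / d_x) · sup_Ω |u|, where D_n = (2 ω_{n−1} / ω_n) ∫₀^{π/2} [1 + n(n−2) cos²θ]^{1/2} sin^{n−2}θ dθ. -/

import Mathlib

open MeasureTheory Real Filter Metric
open scoped Real RealInnerProductSpace

noncomputable section

/-- `Eu n` is the Euclidean space `ℝⁿ`. -/
abbrev Eu (n : ℕ) := EuclideanSpace ℝ (Fin n)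

/-- `ω_n`: the surface area of the unit sphere `S^{n-1}` in `ℝⁿ`,
given by the classical formula `2 π^{n/2} / Γ(n/2)`. -/
def sphereArea (n : ℕ) : ℝ := 2 * π ^ ((n : ℝ) / 2) / Real.Gamma ((n : ℝ) / 2)

/-- A function is harmonic on a set: it is twice continuously differentiable
there and its Laplacian (the sum of the pure second partial derivatives in the
coordinate directions) vanishes at every point of the set. -/
def IsHarmonicOn {n : ℕ} (u : Eu n → ℝ) (Ω : Set (Eu n)) : Prop :=
  ContDiffOn ℝ 2 u Ω ∧ ∀ x ∈ Ω,
    ∑ i, fderiv ℝ (fun y => fderiv ℝ u y (EuclideanSpace.single i 1)) x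
      (EuclideanSpace.single i 1) = 0

/-- The divergence `div u(x) = ∑ⱼ ∂uⱼ/∂xⱼ (x)` of a vector field `u : ℝⁿ → ℝⁿ`. -/
def divg {n : ℕ} (u : Eu n → Eu n) (x : Eu n) : ℝ :=
  ∑ j, fderiv ℝ (fun y => u y j) x (EuclideanSpace.single j 1)

/-- The constant `D_n = (2 ω_{n-1}/ω_n) ∫₀^{π/2} (1 + n(n-2) cos²θ)^{1/2} sin^{n-2}θ dθ`. -/
def Dconst (n : ℕ) : ℝ :=
  (2 * sphereArea (n - 1) / sphereArea n) *
    ∫ θ in (0:ℝ)..(π / 2),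
      Real.sqrt (1 + (n : ℝ) * ((n : ℝ) - 2) * Real.cos θ ^ 2) * Real.sin θ ^ (n - 2)

/-!
The nearest point of `closure G` to `x` determines a supporting half-space whose complement contains
`x` at distance `d_x` from the boundary and on which `u` is harmonic and bounded, so it suffices to
treat a half-space. There, take the Newtonian field `y / ‖y‖ ^ n` with pole at `x` minus its mirror
image. It vanishes on the boundary hyperplane, so Green's identity represents `ω_n div u(x)` as an
integral of `u` over the hyperplane against the normal derivative of this field. The integral of the
length of that derivative, in polar coordinates on the hyperplane with `r = d_x tan θ`, is
`ω_n D_n / d_x`.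

Three limits make this rigorous. The pole is smoothed at scale `η`: the divergence of the smoothed
field is nonnegative with total mass `ω_n`, hence an approximate identity as `η → 0`. The behaviour
at infinity is handled by cutoffs and the decay of the mirrored field. Regularity of `u` up to the
boundary is obtained by moving the hyperplane slightly inwards.
-/

section LaplacianCalculus

open InnerProductSpace Laplacian Module

lemma fderiv_fderiv_apply {E F : Type*} [NormedAddCommGroup E] [NormedSpace ℝ E]
    [NormedAddCommGroup F] [NormedSpace ℝ F] {f : E → F} {x : E} (hf : ContDiffAt ℝ 2 f x)
    (v w : E) : fderiv ℝ (fun y ↦ fderiv ℝ f y v) x w = fderiv ℝ (fderiv ℝ f) x w v := by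
  have hd : DifferentiableAt ℝ (fderiv ℝ f) x :=
    (hf.fderiv_right (m := 1) (by norm_num)).differentiableAt one_ne_zero
  simp [fderiv_clm_apply hd (differentiableAt_const v)]

variable {ι E F : Type*} [Fintype ι] [NormedAddCommGroup E] [InnerProductSpace ℝ E]
  [FiniteDimensional ℝ E] [NormedAddCommGroup F] [NormedSpace ℝ F]

lemma laplacian_eq_sum_fderiv_fderiv (b : OrthonormalBasis ι ℝ E) (f : E → F) (x : E) :
    Δ f x = ∑ i, fderiv ℝ (fderiv ℝ f) x (b i) (b i) := by
  rw [laplacian_eq_iteratedFDeriv_orthonormalBasis f b]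
  simp [iteratedFDeriv_two_apply]

lemma continuous_laplacian {f : E → F} (hf : ContDiff ℝ 2 f) : Continuous (Δ f) := by
  rw [funext (laplacian_eq_sum_fderiv_fderiv (stdOrthonormalBasis ℝ E) f)]
  fun_prop

lemma hasCompactSupport_laplacian {f : E → F} (hf : HasCompactSupport f) :
    HasCompactSupport (Δ f) :=
  ((hf.fderiv ℝ).fderiv ℝ).mono' <| by
    refine subset_closure.trans' fun x hx hzero ↦ hx ?_
    simp [laplacian_eq_sum_fderiv_fderiv (stdOrthonormalBasis ℝ E), hzero]

lemma laplacian_comp_const_smul (f : E → F) (hf : ContDiff ℝ 2 f) (c : ℝ) (x : E) :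
    Δ (fun y ↦ f (c • y)) x = c ^ 2 • Δ f (c • x) := by
  simp [laplacian_eq_iteratedFDeriv_stdOrthonormalBasis,
    iteratedFDeriv_comp_const_smul c hf, Finset.smul_sum]

lemma laplacian_comp_add_right (f : E → F) (a x : E) :
    Δ (fun y ↦ f (y + a)) x = Δ f (x + a) := by
  simp [laplacian_eq_iteratedFDeriv_stdOrthonormalBasis, iteratedFDeriv_comp_add_right]

lemma laplacian_comp_linearIsometryEquiv {f : E → F} (hf : ContDiff ℝ 2 f) (S : E ≃ₗᵢ[ℝ] E)
    (x : E) : Δ (fun y ↦ f (S y)) x = Δ f (S x) := by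
  have hcomp := (S : E →L[ℝ] E).iteratedFDeriv_comp_right hf x (i := 2) le_rfl
  rw [laplacian_eq_iteratedFDeriv_stdOrthonormalBasis,
    laplacian_eq_iteratedFDeriv_orthonormalBasis f ((stdOrthonormalBasis ℝ E).map S)]
  refine Finset.sum_congr rfl fun i _ ↦ ?_
  rw [show (fun y ↦ f (S y)) = f ∘ (S : E →L[ℝ] E) from rfl, hcomp]
  simp [iteratedFDeriv_two_apply]

lemma laplacian_smul_apply (b : OrthonormalBasis ι ℝ E) {ρ : E → ℝ} {f : E → F}
    (hρ : ContDiff ℝ 2 ρ) (hf : ContDiff ℝ 2 f) (x : E) :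
    Δ (fun y ↦ ρ y • f y) x = ρ x • Δ f x
      + ((2 : ℝ) • ∑ i, fderiv ℝ ρ x (b i) • fderiv ℝ f x (b i) + Δ ρ x • f x) := by
  have hρf : ContDiff ℝ 2 fun y ↦ ρ y • f y := hρ.smul hf
  have dρ := hρ.differentiable two_ne_zero
  have df := hf.differentiable two_ne_zero
  have hD : fderiv ℝ (fun y ↦ ρ y • f y) = fun y ↦ ρ y • fderiv ℝ f y
      + (fderiv ℝ ρ y).smulRight (f y) := funext fun y ↦ fderiv_fun_smul (dρ y) (df y)
  have hterm (v : E) : fderiv ℝ (fderiv ℝ fun y ↦ ρ y • f y) x v v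
      = ρ x • fderiv ℝ (fderiv ℝ f) x v v + ((2 : ℝ) • (fderiv ℝ ρ x v • fderiv ℝ f x v)
        + fderiv ℝ (fderiv ℝ ρ) x v v • f x) := by
    rw [← fderiv_fderiv_apply hρf.contDiffAt, hD]
    simp only [add_apply, smul_apply, ContinuousLinearMap.smulRight_apply]
    rw [fderiv_fun_add (by fun_prop) (by fun_prop), fderiv_fun_smul (by fun_prop) (by fun_prop),
      fderiv_fun_smul (by fun_prop) (by fun_prop)]
    simp only [add_apply, smul_apply, ContinuousLinearMap.smulRight_apply,
      fderiv_fderiv_apply hf.contDiffAt, fderiv_fderiv_apply hρ.contDiffAt]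
    module
  simp only [laplacian_eq_sum_fderiv_fderiv b, hterm, Finset.sum_add_distrib, Finset.smul_sum,
    Finset.sum_smul]

lemma norm_laplacian_smul_sub_le {ρ : E → ℝ} {f : E → F} (hρ : ContDiff ℝ 2 ρ)
    (hf : ContDiff ℝ 2 f) (x : E) :
    ‖Δ (fun y ↦ ρ y • f y) x - ρ x • Δ f x‖
      ≤ 2 * finrank ℝ E * ‖fderiv ℝ ρ x‖ * ‖fderiv ℝ f x‖ + ‖Δ ρ x‖ * ‖f x‖ := by
  let b := stdOrthonormalBasis ℝ E
  have hterm (i) : ‖fderiv ℝ ρ x (b i) • fderiv ℝ f x (b i)‖ ≤ ‖fderiv ℝ ρ x‖ * ‖fderiv ℝ f x‖ := by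
    rw [norm_smul]
    gcongr <;> exact ContinuousLinearMap.unit_le_opNorm _ _ (b.norm_eq_one i).le
  rw [laplacian_smul_apply b hρ hf, add_sub_cancel_left]
  calc _ ≤ ‖(2 : ℝ) • ∑ i, fderiv ℝ ρ x (b i) • fderiv ℝ f x (b i)‖ + ‖Δ ρ x • f x‖ :=
        norm_add_le _ _
    _ ≤ 2 * ∑ _i, ‖fderiv ℝ ρ x‖ * ‖fderiv ℝ f x‖ + ‖Δ ρ x‖ * ‖f x‖ := by
        rw [norm_smul, norm_smul, Real.norm_two]
        gcongr
        exact norm_sum_le_of_le _ fun i _ ↦ hterm i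
    _ = _ := by simp [mul_assoc]

lemma sum_fderiv_inner_fderiv_sub {F : Type*} [NormedAddCommGroup F] [InnerProductSpace ℝ F]
    (b : OrthonormalBasis ι ℝ E) {u W : E → F} (hu : ContDiff ℝ 2 u) (hW : ContDiff ℝ 2 W)
    (x : E) :
    ∑ i, fderiv ℝ (fun y ↦ ⟪u y, fderiv ℝ W y (b i)⟫ - ⟪fderiv ℝ u y (b i), W y⟫) x (b i)
      = ⟪u x, Δ W x⟫ - ⟪Δ u x, W x⟫ := by
  have du := hu.differentiable two_ne_zero
  have dW := hW.differentiable two_ne_zero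
  rw [laplacian_eq_sum_fderiv_fderiv b, laplacian_eq_sum_fderiv_fderiv b, inner_sum, sum_inner,
    ← Finset.sum_sub_distrib]
  refine Finset.sum_congr rfl fun i _ ↦ ?_
  rw [fderiv_fun_sub (.inner ℝ (by fun_prop) (by fun_prop)) (.inner ℝ (by fun_prop) (by fun_prop)),
    sub_apply, fderiv_inner_apply ℝ (by fun_prop) (by fun_prop),
    fderiv_inner_apply ℝ (by fun_prop) (by fun_prop), fderiv_fderiv_apply hu.contDiffAt,
    fderiv_fderiv_apply hW.contDiffAt]
  ring

end LaplacianCalculus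

section HalfSpace

open InnerProductSpace Laplacian Module

variable {E : Type*} [NormedAddCommGroup E] [InnerProductSpace ℝ E]

/-- The open half-space with boundary hyperplane `ν^⊥` and inner normal `ν`; it is empty for
`ν = 0`. -/
def openHalfSpace (ν : E) : Set E := {y | 0 < ⟪y, ν⟫}

lemma isOpen_openHalfSpace (ν : E) : IsOpen (openHalfSpace ν) :=
  isOpen_lt continuous_const (by fun_prop)

lemma inner_coe_orthogonal_span_singleton (ν : E) (z : (ℝ ∙ ν)ᗮ) : ⟪(z : E), ν⟫ = 0 :=
  Submodule.mem_orthogonal_singleton_iff_inner_left.1 z.2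

lemma integral_Ioi_fderiv_line {f : E → ℝ} {ν : E} (hν : ‖ν‖ = 1) (hf : ContDiff ℝ 1 f)
    (hc : HasCompactSupport f) (z : E) :
    ∫ t in Set.Ioi (0 : ℝ), fderiv ℝ f (t • ν + z) ν = -f z := by
  have hline : Topology.IsClosedEmbedding fun t : ℝ ↦ t • ν + z :=
    Isometry.isClosedEmbedding <| Isometry.of_dist_eq fun a b ↦ by
      simp [dist_eq_norm, ← sub_smul, norm_smul, hν]
  have hderiv (t : ℝ) : fderiv ℝ f (t • ν + z) ν = deriv (fun t ↦ f (t • ν + z)) t := by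
    have hγ : HasDerivAt (fun t : ℝ ↦ t • ν + z) ν t := by
      simpa using ((hasDerivAt_id t).smul_const ν).add_const z
    exact ((hf.differentiable one_ne_zero _).hasFDerivAt.comp_hasDerivAt t hγ).deriv.symm
  have := (hc.comp_isClosedEmbedding hline).integral_Ioi_deriv_eq (hf.comp (by fun_prop)) 0
  simpa [hderiv, Function.comp_def] using this

variable [FiniteDimensional ℝ E] [MeasurableSpace E] [BorelSpace E] {ν : E}

lemma measurePreserving_smul_add_coe_orthogonal (hν : ‖ν‖ = 1) :
    MeasurePreserving fun q : ℝ × (ℝ ∙ ν)ᗮ ↦ q.1 • ν + (q.2 : E) :=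
  (ℝ ∙ ν).orthogonalDecomposition.symm.measurePreserving.comp <|
    (WithLp.volume_preserving_toLp (U := ℝ ∙ ν) (V := (ℝ ∙ ν)ᗮ)).comp <|
      (LinearIsometryEquiv.toSpanUnitSingleton ν hν).measurePreserving.prod (.id volume)

lemma measurableEmbedding_smul_add_coe_orthogonal (hν : ‖ν‖ = 1) :
    MeasurableEmbedding fun q : ℝ × (ℝ ∙ ν)ᗮ ↦ q.1 • ν + (q.2 : E) := by
  refine Continuous.measurableEmbedding (by fun_prop) fun ⟨t, z⟩ ⟨t', z'⟩ h ↦ ?_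
  have normal_component (s : ℝ) (w : (ℝ ∙ ν)ᗮ) : ⟪s • ν + (w : E), ν⟫ = s := by
    simp [inner_add_left, inner_smul_left, inner_coe_orthogonal_span_singleton, hν]
  obtain rfl : t = t' := by
    simpa only [normal_component] using congrArg (fun y ↦ ⟪y, ν⟫) h
  simpa using h

lemma integrable_fderiv_apply {f : E → ℝ} (hf : ContDiff ℝ 1 f) (hc : HasCompactSupport f)
    (v : E) : Integrable fun y ↦ fderiv ℝ f y v :=
  ((hf.continuous_fderiv one_ne_zero).clm_apply continuous_const).integrable_of_hasCompactSupport
    (hc.fderiv_apply ℝ v)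

lemma setIntegral_openHalfSpace {f : E → ℝ} (hν : ‖ν‖ = 1) (hf : Integrable f) :
    ∫ y in openHalfSpace ν, f y
      = ∫ z : (ℝ ∙ ν)ᗮ, ∫ t in Set.Ioi (0 : ℝ), f (t • ν + z) := by
  have hpre : (fun q : ℝ × (ℝ ∙ ν)ᗮ ↦ q.1 • ν + (q.2 : E)) ⁻¹' openHalfSpace ν
      = Set.Ioi 0 ×ˢ Set.univ := by
    ext ⟨t, z⟩
    simp [openHalfSpace, inner_add_left, inner_smul_left, inner_coe_orthogonal_span_singleton, hν]
  have hmp := measurePreserving_smul_add_coe_orthogonal hν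
  have hme := measurableEmbedding_smul_add_coe_orthogonal hν
  have hint : Integrable (fun q : ℝ × (ℝ ∙ ν)ᗮ ↦ f (q.1 • ν + q.2))
      ((volume.restrict (Set.Ioi 0)).prod volume) := by
    rw [← Measure.restrict_univ (μ := (volume : Measure (ℝ ∙ ν)ᗮ)), Measure.prod_restrict]
    exact ((hmp.integrable_comp_emb hme).2 hf).integrableOn
  rw [← hmp.setIntegral_preimage_emb hme, hpre, Measure.volume_eq_prod, ← Measure.prod_restrict,
    Measure.restrict_univ, integral_prod_symm _ hint]

lemma setIntegral_openHalfSpace_fderiv_of_inner_eq_zero {f : E → ℝ} (hf : ContDiff ℝ 1 f)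
    (hc : HasCompactSupport f) {v : E} (hv : ⟪v, ν⟫ = 0) :
    ∫ y in openHalfSpace ν, fderiv ℝ f y v = 0 := by
  have hmeas := (isOpen_openHalfSpace ν).measurableSet
  -- Lines parallel to `v` do not leave the half-space, so the truncation of `f` to it is still
  -- differentiable along `v`.
  have hline (y : E) : HasLineDerivAt ℝ ((openHalfSpace ν).indicator f)
      ((openHalfSpace ν).indicator (fun y ↦ fderiv ℝ f y v) y) y v := by
    have hmem (t : ℝ) : y + t • v ∈ openHalfSpace ν ↔ y ∈ openHalfSpace ν := by
      simp [openHalfSpace, inner_add_left, inner_smul_left, hv]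
    by_cases hy : y ∈ openHalfSpace ν
    · simpa [HasLineDerivAt, Set.indicator, hmem, hy] using
        (hf.differentiable one_ne_zero y).hasFDerivAt.hasLineDerivAt v
    · simpa [HasLineDerivAt, Set.indicator, hmem, hy] using hasDerivAt_const (0 : ℝ) (0 : ℝ)
  have hzero := integral_bilinear_hasLineDerivAt_right_eq_neg_left_of_integrable
    (μ := (volume : Measure E)) (f := fun _ ↦ (1 : ℝ)) (f' := fun _ ↦ (0 : ℝ))
    (B := ContinuousLinearMap.mul ℝ ℝ) (by simp)
    (by simpa using (integrable_fderiv_apply hf hc v).indicator hmeas)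
    (by simpa using (hf.continuous.integrable_of_hasCompactSupport hc).indicator hmeas)
    (fun y _ ↦ by simpa using (hasFDerivAt_const (1 : ℝ) y).hasLineDerivAt v) (fun y _ ↦ hline y)
  simpa [integral_indicator hmeas] using hzero

theorem setIntegral_openHalfSpace_fderiv {f : E → ℝ} (hν : ‖ν‖ = 1) (hf : ContDiff ℝ 1 f)
    (hc : HasCompactSupport f) (v : E) :
    ∫ y in openHalfSpace ν, fderiv ℝ f y v = -(⟪v, ν⟫ * ∫ z : (ℝ ∙ ν)ᗮ, f z) := by
  have hnormal : ∫ y in openHalfSpace ν, fderiv ℝ f y ν = -∫ z : (ℝ ∙ ν)ᗮ, f z := by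
    simp_rw [setIntegral_openHalfSpace hν (integrable_fderiv_apply hf hc ν),
      integral_Ioi_fderiv_line hν hf hc, integral_neg]
  have htangent := setIntegral_openHalfSpace_fderiv_of_inner_eq_zero hf hc
    (v := v - ⟪v, ν⟫ • ν) (ν := ν) (by simp [inner_sub_left, inner_smul_left, hν])
  simp only [map_sub, map_smul, smul_eq_mul] at htangent
  rw [integral_sub (integrable_fderiv_apply hf hc v).integrableOn
    ((integrable_fderiv_apply hf hc ν).const_mul _).integrableOn, integral_const_mul,
    hnormal] at htangent
  linarith

variable {ι : Type*} [Fintype ι]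

theorem setIntegral_openHalfSpace_sum_fderiv (b : OrthonormalBasis ι ℝ E) {V : ι → E → ℝ}
    (hν : ‖ν‖ = 1) (hV : ∀ i, ContDiff ℝ 1 (V i)) (hc : ∀ i, HasCompactSupport (V i)) :
    ∫ y in openHalfSpace ν, ∑ i, fderiv ℝ (V i) y (b i)
      = -∫ z : (ℝ ∙ ν)ᗮ, ∑ i, ⟪b i, ν⟫ * V i z := by
  have hint (i) : Integrable fun z : (ℝ ∙ ν)ᗮ ↦ ⟪b i, ν⟫ * V i z :=
    (((hV i).continuous.comp continuous_subtype_val).integrable_of_hasCompactSupport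
      ((hc i).comp_isClosedEmbedding
        (Submodule.closed_of_finiteDimensional _).isClosedEmbedding_subtypeVal)).const_mul _
  rw [integral_finsetSum _ fun i _ ↦ (integrable_fderiv_apply (hV i) (hc i) (b i)).integrableOn,
    integral_finsetSum _ fun i _ ↦ hint i, ← Finset.sum_neg_distrib]
  exact Finset.sum_congr rfl fun i _ ↦ by
    rw [setIntegral_openHalfSpace_fderiv hν (hV i) (hc i), integral_const_mul]

theorem setIntegral_openHalfSpace_inner_laplacian {F : Type*} [NormedAddCommGroup F]
    [InnerProductSpace ℝ F] {u W : E → F} (hν : ‖ν‖ = 1) (hu : ContDiff ℝ 2 u)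
    (hΔu : ∀ y ∈ openHalfSpace ν, Δ u y = 0) (hW : ContDiff ℝ 2 W) (hc : HasCompactSupport W)
    (hW0 : ∀ z : (ℝ ∙ ν)ᗮ, W z = 0) :
    ∫ y in openHalfSpace ν, ⟪u y, Δ W y⟫ = -∫ z : (ℝ ∙ ν)ᗮ, ⟪u z, fderiv ℝ W z ν⟫ := by
  let b := stdOrthonormalBasis ℝ E
  let V (i) (y : E) : ℝ := ⟪u y, fderiv ℝ W y (b i)⟫ - ⟪fderiv ℝ u y (b i), W y⟫
  have hDu : ContDiff ℝ 1 (fderiv ℝ u) := hu.fderiv_right (by norm_num)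
  have hDW : ContDiff ℝ 1 (fderiv ℝ W) := hW.fderiv_right (by norm_num)
  have hV (i) : ContDiff ℝ 1 (V i) :=
    ((hu.of_le one_le_two).inner ℝ (hDW.clm_apply contDiff_const)).sub
      ((hDu.clm_apply contDiff_const).inner ℝ (hW.of_le one_le_two))
  have hVc (i) : HasCompactSupport (V i) := by
    refine HasCompactSupport.sub ((hc.fderiv_apply ℝ (b i)).mono fun y hy hzero ↦ hy ?_)
      (hc.mono fun y hy hzero ↦ hy ?_) <;> simp [hzero]
  have hflux (z : (ℝ ∙ ν)ᗮ) : ∑ i, ⟪b i, ν⟫ * V i z = ⟪u z, fderiv ℝ W z ν⟫ := by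
    have hν_sum := congrArg (fderiv ℝ W z) (b.sum_repr ν)
    simp [V, hW0, ← hν_sum, inner_sum, inner_smul_right, b.repr_apply_apply]
  have hgreen := setIntegral_openHalfSpace_sum_fderiv b hν hV hVc
  simp_rw [hflux, V, sum_fderiv_inner_fderiv_sub b hu hW] at hgreen
  rw [← hgreen]
  refine setIntegral_congr_fun (isOpen_openHalfSpace ν).measurableSet fun y hy ↦ ?_
  simp [hΔu y hy]

end HalfSpace

section RadialField

open InnerProductSpace Laplacian Module

variable {E : Type*} [NormedAddCommGroup E] [InnerProductSpace ℝ E]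

lemma fderiv_comp_norm_sq_apply {h : ℝ → ℝ} {y : E} (hh : DifferentiableAt ℝ h (‖y‖ ^ 2)) (v : E) :
    fderiv ℝ (fun y ↦ h (‖y‖ ^ 2)) y v = 2 * deriv h (‖y‖ ^ 2) * ⟪y, v⟫ := by
  have hcomp := hh.hasDerivAt.comp_hasFDerivAt y (hasStrictFDerivAt_norm_sq y).hasFDerivAt
  rw [show (fun y : E ↦ h (‖y‖ ^ 2)) = h ∘ fun y ↦ ‖y‖ ^ 2 from rfl, hcomp.fderiv]
  simp only [smul_apply, coe_innerSL_apply, nsmul_eq_mul, Nat.cast_ofNat, smul_eq_mul]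
  ring

/-- The vector field `y ↦ h(‖y‖²) y`; for `h s = s^{-n/2}` it is the Newtonian field `y / ‖y‖ⁿ`. -/
def radialField (h : ℝ → ℝ) (y : E) : E := h (‖y‖ ^ 2) • y

/-- The divergence of `radialField h` in dimension `n` as a function of `s = ‖y‖²`. -/
def radialDivergence (n : ℕ) (h : ℝ → ℝ) (s : ℝ) : ℝ := n * h s + 2 * (s * deriv h s)

lemma contDiff_radialDivergence (n : ℕ) {h : ℝ → ℝ} (hh : ContDiff ℝ 3 h) :
    ContDiff ℝ 2 (radialDivergence n h) := by
  have hh2 : ContDiff ℝ 2 h := hh.of_le (by norm_num)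
  unfold radialDivergence
  fun_prop

lemma deriv_radialDivergence (n : ℕ) {h : ℝ → ℝ} (hh : ContDiff ℝ 2 h) (s : ℝ) :
    deriv (radialDivergence n h) s = (n + 2) * deriv h s + 2 * (s * deriv (deriv h) s) := by
  have d1 : HasDerivAt h (deriv h s) s := (hh.differentiable two_ne_zero s).hasDerivAt
  have d2 : HasDerivAt (deriv h) (deriv (deriv h) s) s := (hh.differentiable_deriv_two s).hasDerivAt
  refine (((d1.const_mul _).add (((hasDerivAt_id s).mul d2).const_mul 2)).congr_deriv ?_).deriv
  simp only [id_eq]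
  ring

lemma contDiff_radialField {h : ℝ → ℝ} (hh : ContDiff ℝ 2 h) :
    ContDiff ℝ 2 (radialField h : E → E) :=
  (hh.comp (contDiff_norm_sq ℝ)).smul contDiff_id

lemma fderiv_radialField_apply {h : ℝ → ℝ} (hh : Differentiable ℝ h) (y v : E) :
    fderiv ℝ (radialField h) y v
      = h (‖y‖ ^ 2) • v + (2 * deriv h (‖y‖ ^ 2) * ⟪y, v⟫) • y := by
  have hsq : DifferentiableAt ℝ (fun y : E ↦ h (‖y‖ ^ 2)) y :=
    (hh _).comp y (contDiff_norm_sq ℝ (n := 1)).contDiffAt.differentiableAt_one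
  unfold radialField
  rw [fderiv_fun_smul hsq differentiableAt_fun_id]
  simp [fderiv_comp_norm_sq_apply (hh _)]

variable [FiniteDimensional ℝ E]

lemma laplacian_comp_norm_sq {h : ℝ → ℝ} (hh : ContDiff ℝ 2 h) (y : E) :
    Δ (fun y : E ↦ h (‖y‖ ^ 2)) y
      = 2 * finrank ℝ E * deriv h (‖y‖ ^ 2) + 4 * (‖y‖ ^ 2 * deriv (deriv h) (‖y‖ ^ 2)) := by
  let b := stdOrthonormalBasis ℝ E
  have hh' : Differentiable ℝ (deriv h) := hh.differentiable_deriv_two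
  have hsq : ContDiff ℝ 2 fun y : E ↦ h (‖y‖ ^ 2) := hh.comp (contDiff_norm_sq ℝ)
  have hsq' : DifferentiableAt ℝ (fun y : E ↦ deriv h (‖y‖ ^ 2)) y :=
    (hh' _).comp y (contDiff_norm_sq ℝ (n := 1)).contDiffAt.differentiableAt_one
  have hterm (v : E) : fderiv ℝ (fderiv ℝ fun y : E ↦ h (‖y‖ ^ 2)) y v v
      = 4 * deriv (deriv h) (‖y‖ ^ 2) * ⟪y, v⟫ ^ 2 + 2 * deriv h (‖y‖ ^ 2) * ‖v‖ ^ 2 := by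
    rw [← fderiv_fderiv_apply hsq.contDiffAt]
    simp_rw [fderiv_comp_norm_sq_apply (hh.differentiable two_ne_zero _), mul_assoc]
    have hinner : DifferentiableAt ℝ (fun y : E ↦ ⟪y, v⟫) y :=
      differentiableAt_fun_id.inner ℝ (differentiableAt_const v)
    rw [fderiv_const_mul (hsq'.fun_mul hinner), fderiv_fun_mul hsq' hinner]
    simp only [smul_add, add_apply, smul_apply, differentiableAt_fun_id, differentiableAt_const,
      fderiv_inner_apply, fderiv_fun_const, Pi.zero_apply, zero_apply, inner_zero_right,
      fderiv_fun_id, ContinuousLinearMap.id_apply, inner_self_eq_norm_sq_to_K, ringHom_apply,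
      zero_add, smul_eq_mul, fderiv_comp_norm_sq_apply (hh' _)]
    ring
  rw [laplacian_eq_sum_fderiv_fderiv b]
  simp only [hterm, Finset.sum_add_distrib, ← Finset.mul_sum, b.norm_eq_one,
    OrthonormalBasis.sum_sq_inner_left, one_pow, Finset.sum_const, Finset.card_univ,
    Fintype.card_fin, nsmul_eq_mul, mul_one]
  ring

lemma laplacian_radialField {h : ℝ → ℝ} (hh : ContDiff ℝ 2 h) (y : E) :
    Δ (radialField h : E → E) y = ((2 * finrank ℝ E + 4) * deriv h (‖y‖ ^ 2)
      + 4 * (‖y‖ ^ 2 * deriv (deriv h) (‖y‖ ^ 2))) • y := by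
  let b := stdOrthonormalBasis ℝ E
  have hid : Δ (fun y : E ↦ y) y = 0 := by
    have hD : fderiv ℝ (fun y : E ↦ y) = fun _ ↦ .id ℝ E := funext fun _ ↦ fderiv_fun_id
    simp [laplacian_eq_sum_fderiv_fderiv b, hD]
  have hgrad : ∑ i, ⟪y, b i⟫ • b i = y := by
    simpa [b.repr_apply_apply, real_inner_comm] using b.sum_repr y
  have hsq : ContDiff ℝ 2 fun y : E ↦ h (‖y‖ ^ 2) := hh.comp (contDiff_norm_sq ℝ)
  unfold radialField
  rw [laplacian_smul_apply b hsq contDiff_fun_id, hid,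
    laplacian_comp_norm_sq hh]
  simp only [fderiv_comp_norm_sq_apply (hh.differentiable two_ne_zero _), fderiv_fun_id,
    ContinuousLinearMap.id_apply, mul_smul, ← Finset.smul_sum, hgrad]
  module

-- Both sides are radial gradients: `radialField h` is the gradient of a radial function `Φ`, its
-- divergence is `Δ Φ`, and `Δ` commutes with `∇`.
lemma fderiv_radialDivergence_norm_sq_apply {h : ℝ → ℝ} (hh : ContDiff ℝ 3 h) (y v : E) :
    fderiv ℝ (fun y ↦ radialDivergence (finrank ℝ E) h (‖y‖ ^ 2)) y v
      = ⟪v, Δ (radialField h : E → E) y⟫ := by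
  rw [fderiv_comp_norm_sq_apply ((contDiff_radialDivergence _ hh).differentiable two_ne_zero _),
    laplacian_radialField (hh.of_le (by norm_num)),
    deriv_radialDivergence _ (hh.of_le (by norm_num)), inner_smul_right, real_inner_comm]
  ring

end RadialField

section RegularizedPower

/-- The function `h` regularizes `s ↦ s^{-n/2}` below `η²`, keeping the divergence
of the field `radialField h` in dimension `n` nonnegative. -/
structure IsRegularizedPower (n : ℕ) (η : ℝ) (h : ℝ → ℝ) : Prop where
  contDiff : ContDiff ℝ 3 h
  eq_rpow : ∀ s, η ^ 2 ≤ s → h s = s ^ (-(n : ℝ) / 2)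
  nonneg : ∀ s, 0 ≤ s → 0 ≤ radialDivergence n h s

lemma sq_rpow_neg_half (n : ℕ) {r : ℝ} (hr : 0 < r) : (r ^ 2) ^ (-(n : ℝ) / 2) = (r ^ n)⁻¹ := by
  rw [← rpow_natCast, ← rpow_mul hr.le, ← rpow_natCast, ← rpow_neg hr.le]
  congr 1
  push_cast
  ring

lemma mul_rpow_add_two_mul_deriv_nonneg {p s : ℝ} (hs : 0 < s) {θ : ℝ → ℝ}
    (hθ : DifferentiableAt ℝ θ s) (hmono : Monotone θ) :
    0 ≤ 2 * p * (s ^ (-p) * θ s) + 2 * (s * deriv (fun s ↦ s ^ (-p) * θ s) s) := by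
  have hderiv := ((hasDerivAt_rpow_const (p := -p) (Or.inl hs.ne')).fun_mul hθ.hasDerivAt).deriv
  have hpow : s * s ^ (-p - 1) = s ^ (-p) := by
    rw [rpow_sub_one hs.ne', mul_div_cancel₀ _ hs.ne']
  have : 0 ≤ 2 * s * s ^ (-p) * deriv θ s := by
    have := hmono.deriv_nonneg (x := s)
    positivity
  rw [hderiv]
  linear_combination this + 2 * p * θ s * hpow

lemma exists_isRegularizedPower (n : ℕ) {η : ℝ} (hη : 0 < η) : ∃ h, IsRegularizedPower n η h := by
  let θ : ℝ → ℝ := fun s ↦ smoothTransition (2 * s / η ^ 2 - 1)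
  have hη2 : 0 < η ^ 2 := by positivity
  have hθ : ContDiff ℝ 3 θ := (smoothTransition.contDiff (n := 3)).comp (by fun_prop)
  have hmono : Monotone θ := fun a b hab ↦ smoothTransition.monotone (by gcongr)
  have hθ0 (s : ℝ) (hs : s ≤ η ^ 2 / 2) : θ s = 0 :=
    smoothTransition.zero_of_nonpos (by rw [sub_nonpos, div_le_one hη2]; linarith)
  have hθ1 (s : ℝ) (hs : η ^ 2 ≤ s) : θ s = 1 :=
    smoothTransition.one_of_one_le (by rw [le_sub_iff_add_le, le_div_iff₀ hη2]; linarith)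
  refine ⟨fun s ↦ s ^ (-(n : ℝ) / 2) * θ s, ?_, fun s hs ↦ by simp [hθ1 s hs], fun s hs ↦ ?_⟩
  · refine contDiff_iff_contDiffAt.2 fun s ↦ ?_
    rcases lt_or_ge 0 s with hs | hs
    · exact (contDiffAt_rpow_const_of_ne hs.ne').mul hθ.contDiffAt
    · refine (contDiffAt_const (c := 0)).congr_of_eventuallyEq ?_
      filter_upwards [Iio_mem_nhds (show s < η ^ 2 / 2 by linarith [half_pos hη2])] with t ht
      rw [hθ0 t ht.le, mul_zero]
  · rcases hs.eq_or_lt with rfl | hs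
    · simp [radialDivergence, hθ0 0 (by positivity)]
    · simpa [radialDivergence, neg_div, mul_div_cancel₀] using
        mul_rpow_add_two_mul_deriv_nonneg (p := n / 2) hs (hθ.differentiable (by norm_num) s) hmono

namespace IsRegularizedPower

variable {n : ℕ} {η : ℝ} {h : ℝ → ℝ}

lemma differentiable (hh : IsRegularizedPower n η h) : Differentiable ℝ h :=
  hh.contDiff.differentiable (by norm_num)

lemma deriv_eq (hh : IsRegularizedPower n η h) {s : ℝ} (hs : η ^ 2 < s) :
    deriv h s = -(n : ℝ) / 2 * s ^ (-(n : ℝ) / 2) / s := by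
  have hs0 : 0 < s := (sq_nonneg η).trans_lt hs
  have heq : h =ᶠ[nhds s] fun s ↦ s ^ (-(n : ℝ) / 2) := by
    filter_upwards [Ioi_mem_nhds hs] with t ht using hh.eq_rpow t (le_of_lt ht)
  rw [heq.deriv_eq, Real.deriv_rpow_const, rpow_sub_one hs0.ne', mul_div_assoc]

lemma radialDivergence_eq_zero (hh : IsRegularizedPower n η h) {s : ℝ}
    (hs : η ^ 2 < s) : radialDivergence n h s = 0 := by
  have hs0 : 0 < s := (sq_nonneg η).trans_lt hs
  rw [radialDivergence, hh.deriv_eq hs, hh.eq_rpow s hs.le]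
  field_simp
  ring

lemma integral_Ioi_pow_mul_radialDivergence (hh : IsRegularizedPower n η h) (hη : 0 < η)
    (hn : n ≠ 0) :
    ∫ r in Set.Ioi (0 : ℝ), r ^ (n - 1) * radialDivergence n h (r ^ 2) = 1 := by
  have hderiv (r : ℝ) : HasDerivAt (fun r ↦ r ^ n * h (r ^ 2))
      (r ^ (n - 1) * radialDivergence n h (r ^ 2)) r := by
    have hsq := (hh.differentiable (r ^ 2)).hasDerivAt.comp r (hasDerivAt_pow 2 r)
    refine ((hasDerivAt_pow n r).mul hsq).congr_deriv ?_
    rw [radialDivergence, ← pow_sub_one_mul hn r]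
    simp only [Function.comp_apply]
    push_cast
    ring
  have hlim : Tendsto (fun r : ℝ ↦ r ^ n * h (r ^ 2)) atTop (nhds 1) := by
    refine tendsto_const_nhds.congr' ?_
    filter_upwards [eventually_ge_atTop η] with r hr
    have hr0 : 0 < r := hη.trans_le hr
    rw [hh.eq_rpow _ (by gcongr), sq_rpow_neg_half n hr0, mul_inv_cancel₀ (by positivity)]
  rw [integral_Ioi_of_hasDerivAt_of_nonneg' (fun r _ ↦ hderiv r)
    (fun r hr ↦ mul_nonneg (pow_nonneg (le_of_lt hr) _) (hh.nonneg _ (sq_nonneg r))) hlim]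
  simp [hn]

end IsRegularizedPower

end RegularizedPower

section RegularizedNewtonianField

open InnerProductSpace Laplacian Module

namespace IsRegularizedPower

variable {E : Type*} [NormedAddCommGroup E] [InnerProductSpace ℝ E] {η : ℝ} {h : ℝ → ℝ}

lemma norm_radialField {n : ℕ} (hh : IsRegularizedPower n η h) (hη : 0 < η) {y : E}
    (hy : η ≤ ‖y‖) : ‖radialField h y‖ = ‖y‖ * (‖y‖ ^ n)⁻¹ := by
  have hy0 : 0 < ‖y‖ := hη.trans_le hy
  rw [radialField, hh.eq_rpow _ (by gcongr), sq_rpow_neg_half n hy0, norm_smul, mul_comm,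
    norm_of_nonneg (by positivity)]

lemma fderiv_radialField {n : ℕ} (hh : IsRegularizedPower n η h) (hη : 0 < η) {y : E}
    (hy : η < ‖y‖) (v : E) : fderiv ℝ (radialField h) y v
      = (‖y‖ ^ 2) ^ (-(n : ℝ) / 2) • (v - (n * (⟪y, v⟫ / ‖y‖ ^ 2)) • y) := by
  have hs : η ^ 2 < ‖y‖ ^ 2 := by gcongr
  rw [fderiv_radialField_apply hh.differentiable, hh.deriv_eq hs, hh.eq_rpow _ hs.le]
  module

lemma norm_fderiv_radialField_apply {n : ℕ} (hh : IsRegularizedPower n η h) (hη : 0 < η) {y : E}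
    (hy : η < ‖y‖) (v : E) : ‖fderiv ℝ (radialField h) y v‖
      = (‖y‖ ^ 2) ^ (-(n : ℝ) / 2) * √(‖v‖ ^ 2 + n * (n - 2) * (⟪y, v⟫ ^ 2 / ‖y‖ ^ 2)) := by
  have hy0 : 0 < ‖y‖ := hη.trans hy
  rw [hh.fderiv_radialField hη hy, norm_smul, norm_of_nonneg (by positivity),
    ← sqrt_sq (norm_nonneg (v - _)), norm_sub_sq_real]
  congr 2
  simp only [inner_smul_right, norm_smul, mul_pow, norm_eq_abs, sq_abs, real_inner_comm y v]
  field_simp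
  ring

lemma norm_fderiv_radialField_le {n : ℕ} (hh : IsRegularizedPower n η h) (hη : 0 < η) {y : E}
    (hy : η < ‖y‖) : ‖fderiv ℝ (radialField h) y‖ ≤ (n + 1) * (‖y‖ ^ n)⁻¹ := by
  have hy0 : 0 < ‖y‖ := hη.trans hy
  refine ContinuousLinearMap.opNorm_le_bound _ (by positivity) fun v ↦ ?_
  rw [hh.fderiv_radialField hη hy, sq_rpow_neg_half n hy0, norm_smul,
    norm_of_nonneg (by positivity), mul_comm, mul_right_comm]
  gcongr
  calc ‖v - (n * (⟪y, v⟫ / ‖y‖ ^ 2)) • y‖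
      ≤ ‖v‖ + ‖(n * (⟪y, v⟫ / ‖y‖ ^ 2)) • y‖ := norm_sub_le _ _
    _ = ‖v‖ + n * (|⟪y, v⟫| / ‖y‖) := by
        simp only [norm_smul, norm_mul, norm_div, norm_pow, norm_eq_abs, Nat.abs_cast, abs_norm]
        field_simp
    _ ≤ ‖v‖ + n * ‖v‖ := by
        gcongr
        exact div_le_of_le_mul₀ hy0.le (norm_nonneg v)
          ((abs_real_inner_le_norm y v).trans_eq (mul_comm _ _))
    _ = (n + 1) * ‖v‖ := by ring

lemma laplacian_radialField_eq_zero [FiniteDimensional ℝ E]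
    (hh : IsRegularizedPower (finrank ℝ E) η h) (hη : 0 < η) {y : E} (hy : η < ‖y‖) :
    Δ (radialField h : E → E) y = 0 := by
  have hlocal : (fun y : E ↦ radialDivergence (finrank ℝ E) h (‖y‖ ^ 2)) =ᶠ[nhds y] fun _ ↦ 0 := by
    filter_upwards [continuous_norm.continuousAt.eventually (Ioi_mem_nhds hy)] with z hz
    exact hh.radialDivergence_eq_zero (by gcongr)
  refine ext_inner_left ℝ fun v ↦ ?_
  rw [← fderiv_radialDivergence_norm_sq_apply hh.contDiff, hlocal.fderiv_eq]
  simp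

end IsRegularizedPower

end RegularizedNewtonianField

section PolarCoordinates

open Module

lemma sphereArea_pos {n : ℕ} (hn : 1 ≤ n) : 0 < sphereArea n := by
  unfold sphereArea
  positivity

lemma sphereArea_eq_mul_volume_ball {n : ℕ} (hn : 1 ≤ n) :
    sphereArea n = n * (√π ^ n / Real.Gamma (n / 2 + 1)) := by
  have hΓ : Real.Gamma (n / 2) ≠ 0 := (Real.Gamma_pos_of_pos (by positivity)).ne'
  rw [sphereArea, Real.Gamma_add_one (by positivity), sqrt_eq_rpow, ← rpow_natCast,
    ← rpow_mul pi_pos.le, one_div_mul_eq_div]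
  field_simp

variable {E : Type*} [NormedAddCommGroup E] [InnerProductSpace ℝ E] [FiniteDimensional ℝ E]
  [MeasurableSpace E] [BorelSpace E] [Nontrivial E]

lemma integral_fun_norm_eq_sphereArea_mul (f : ℝ → ℝ) :
    ∫ z : E, f ‖z‖
      = sphereArea (finrank ℝ E) * ∫ r in Set.Ioi (0 : ℝ), r ^ (finrank ℝ E - 1) * f r := by
  have hΓ : 0 < Real.Gamma ((finrank ℝ E : ℝ) / 2 + 1) := Real.Gamma_pos_of_pos (by positivity)
  rw [integral_fun_norm_addHaar, sphereArea_eq_mul_volume_ball (n := finrank ℝ E) finrank_pos,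
    Measure.real, InnerProductSpace.volume_ball]
  simp [ENNReal.toReal_ofReal (show 0 ≤ √π ^ finrank ℝ E / _ by positivity), mul_assoc]

lemma IsRegularizedPower.integral_radialDivergence {η : ℝ} {h : ℝ → ℝ}
    (hh : IsRegularizedPower (finrank ℝ E) η h) (hη : 0 < η) (x : E) :
    ∫ y : E, radialDivergence (finrank ℝ E) h (‖y - x‖ ^ 2) = sphereArea (finrank ℝ E) := by
  rw [integral_sub_right_eq_self (fun y : E ↦ radialDivergence (finrank ℝ E) h (‖y‖ ^ 2)) x,
    integral_fun_norm_eq_sphereArea_mul (fun r ↦ radialDivergence (finrank ℝ E) h (r ^ 2)),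
    hh.integral_Ioi_pow_mul_radialDivergence hη finrank_pos.ne', mul_one]

end PolarCoordinates

section BoundaryDensity

open Module

/-- The length `‖∂F/∂ν‖` of the normal derivative at boundary distance `r` from the pole's foot
point, where `F` is the reflected Newtonian field (`reflectedField`) with pole at height `d`. -/
def boundaryDensity (n : ℕ) (d r : ℝ) : ℝ :=
  2 * ((d ^ 2 + r ^ 2) ^ (-(n : ℝ) / 2) * √(1 + n * (n - 2) * (d ^ 2 / (d ^ 2 + r ^ 2))))

variable {n : ℕ} {d : ℝ}

lemma cos_pos_of_mem_Ioo_zero_pi_div_two {t : ℝ} (ht : t ∈ Set.Ioo 0 (π / 2)) : 0 < cos t :=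
  cos_pos_of_mem_Ioo ⟨by linarith [ht.1, pi_pos], ht.2⟩

lemma image_mul_tan_Ioo (hd : 0 < d) : (fun t ↦ d * tan t) '' Set.Ioo 0 (π / 2) = Set.Ioi 0 := by
  ext r
  constructor
  · rintro ⟨t, ht, rfl⟩
    exact mul_pos hd (tan_pos_of_pos_of_lt_pi_div_two ht.1 ht.2)
  · intro hr
    exact ⟨arctan (r / d), ⟨arctan_pos.2 (div_pos hr hd), arctan_lt_pi_div_two _⟩, by
      simp only [tan_arctan, mul_div_cancel₀ _ hd.ne']⟩

lemma injOn_mul_tan_Ioo (hd : d ≠ 0) : Set.InjOn (fun t ↦ d * tan t) (Set.Ioo 0 (π / 2)) :=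
  fun _ ha _ hb hab ↦ tan_inj_of_lt_of_lt_pi_div_two (by linarith [ha.1, pi_pos]) ha.2
    (by linarith [hb.1, pi_pos]) hb.2 (mul_left_cancel₀ hd hab)

lemma hasDerivWithinAt_mul_tan (d : ℝ) (t : ℝ) (ht : t ∈ Set.Ioo 0 (π / 2)) :
    HasDerivWithinAt (fun t ↦ d * tan t) (d * (1 / cos t ^ 2)) (Set.Ioo 0 (π / 2)) t :=
  ((hasDerivAt_tan (cos_pos_of_mem_Ioo_zero_pi_div_two ht).ne').const_mul d).hasDerivWithinAt

lemma abs_deriv_smul_boundaryDensity_mul_tan (hn : 2 ≤ n) (hd : 0 < d) {t : ℝ}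
    (ht : t ∈ Set.Ioo 0 (π / 2)) :
    |d * (1 / cos t ^ 2)| • ((d * tan t) ^ (n - 2) * boundaryDensity n d (d * tan t))
      = 2 / d * (√(1 + (n : ℝ) * ((n : ℝ) - 2) * cos t ^ 2) * sin t ^ (n - 2)) := by
  have hcos := cos_pos_of_mem_Ioo_zero_pi_div_two ht
  have hsq : d ^ 2 + (d * tan t) ^ 2 = (d / cos t) ^ 2 := by
    rw [tan_eq_sin_div_cos]
    field_simp
    exact cos_sq_add_sin_sq t
  have hratio : d ^ 2 / (d / cos t) ^ 2 = cos t ^ 2 := by field_simp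
  rw [boundaryDensity, hsq, sq_rpow_neg_half n (by positivity), hratio, abs_of_pos (by positivity),
    tan_eq_sin_div_cos]
  obtain ⟨m, rfl⟩ : ∃ m, n = m + 2 := ⟨n - 2, by omega⟩
  simp only [Nat.add_sub_cancel, smul_eq_mul, mul_pow, div_pow]
  field_simp
  ring

lemma integrableOn_pow_mul_boundaryDensity (hn : 2 ≤ n) (hd : 0 < d) :
    IntegrableOn (fun r ↦ r ^ (n - 2) * boundaryDensity n d r) (Set.Ioi 0) := by
  rw [← image_mul_tan_Ioo hd, integrableOn_image_iff_integrableOn_abs_deriv_smul measurableSet_Ioo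
    (hasDerivWithinAt_mul_tan d) (injOn_mul_tan_Ioo hd.ne')]
  refine IntegrableOn.congr_fun ?_
    (fun t ht ↦ (abs_deriv_smul_boundaryDensity_mul_tan hn hd ht).symm) measurableSet_Ioo
  exact (Continuous.integrableOn_Icc (by fun_prop)).mono_set Set.Ioo_subset_Icc_self

lemma sphereArea_mul_integral_pow_mul_boundaryDensity (hn : 2 ≤ n) (hd : 0 < d) :
    sphereArea (n - 1) * ∫ r in Set.Ioi (0 : ℝ), r ^ (n - 2) * boundaryDensity n d r
      = sphereArea n * (Dconst n / d) := by
  have hω : sphereArea n ≠ 0 := (sphereArea_pos (by omega)).ne'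
  rw [← image_mul_tan_Ioo hd, integral_image_eq_integral_abs_deriv_smul measurableSet_Ioo
      (hasDerivWithinAt_mul_tan d) (injOn_mul_tan_Ioo hd.ne'), setIntegral_congr_fun
      measurableSet_Ioo (fun t ht ↦ abs_deriv_smul_boundaryDensity_mul_tan hn hd ht),
    integral_const_mul, ← integral_Ioc_eq_integral_Ioo,
    ← intervalIntegral.integral_of_le (by positivity), Dconst]
  field_simp

variable {E : Type*} [NormedAddCommGroup E] [InnerProductSpace ℝ E] [FiniteDimensional ℝ E]
  [MeasurableSpace E] [BorelSpace E] [Nontrivial E]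

lemma integrable_boundaryDensity_norm (hE : finrank ℝ E + 1 = n) (hd : 0 < d) :
    Integrable fun z : E ↦ boundaryDensity n d ‖z‖ := by
  have hpos : 0 < finrank ℝ E := finrank_pos
  have := integrableOn_pow_mul_boundaryDensity (n := n) (by omega) hd
  rwa [integrable_fun_norm_addHaar volume (f := boundaryDensity n d),
    show finrank ℝ E - 1 = n - 2 by omega]

theorem integral_boundaryDensity_norm (hE : finrank ℝ E + 1 = n) (hd : 0 < d) :
    ∫ z : E, boundaryDensity n d ‖z‖ = sphereArea n * (Dconst n / d) := by
  have hpos : 0 < finrank ℝ E := finrank_pos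
  rw [integral_fun_norm_eq_sphereArea_mul (boundaryDensity n d),
    ← sphereArea_mul_integral_pow_mul_boundaryDensity (by omega) hd,
    show finrank ℝ E - 1 = n - 2 by omega, show finrank ℝ E = n - 1 by omega]

end BoundaryDensity

section ReflectedField

open InnerProductSpace Laplacian Module

variable {E : Type*} [NormedAddCommGroup E] [InnerProductSpace ℝ E] {ν : E} {d : ℝ}

/-- The difference of `radialField h` centred at `d • ν` and its mirror image in the hyperplane
`ν^⊥`; it vanishes on that hyperplane. -/
def reflectedField (h : ℝ → ℝ) (ν : E) (d : ℝ) (y : E) : E :=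
  radialField h ((ℝ ∙ ν)ᗮ.reflection y - d • ν) - radialField h (y - d • ν)

lemma contDiff_reflectedField {h : ℝ → ℝ} (hh : ContDiff ℝ 2 h) (ν : E) (d : ℝ) :
    ContDiff ℝ 2 (reflectedField h ν d) := by
  have hG := contDiff_radialField (E := E) hh
  have hS : ContDiff ℝ 2 fun y ↦ (ℝ ∙ ν)ᗮ.reflection y - d • ν :=
    (LinearIsometryEquiv.contDiff _).sub contDiff_const
  exact (hG.comp hS).sub (hG.comp (contDiff_id.sub contDiff_const))

lemma reflectedField_coe_orthogonal (h : ℝ → ℝ) (d : ℝ) (z : (ℝ ∙ ν)ᗮ) :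
    reflectedField h ν d z = 0 := by
  simp [reflectedField, Submodule.reflection_mem_subspace_eq_self z.2]

lemma inner_reflection_orthogonal_span_singleton (ν y : E) :
    ⟪(ℝ ∙ ν)ᗮ.reflection y, ν⟫ = -⟪y, ν⟫ := by
  rw [← LinearIsometryEquiv.inner_map_map (ℝ ∙ ν)ᗮ.reflection y ν,
    Submodule.reflection_orthogonalComplement_singleton_eq_neg, inner_neg_right, neg_neg]

lemma fderiv_reflectedField_apply {h : ℝ → ℝ} (hh : ContDiff ℝ 2 h) (ν : E) (d : ℝ) (y v : E) :
    fderiv ℝ (reflectedField h ν d) y v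
      = fderiv ℝ (radialField h) ((ℝ ∙ ν)ᗮ.reflection y - d • ν) ((ℝ ∙ ν)ᗮ.reflection v)
        - fderiv ℝ (radialField h) (y - d • ν) v := by
  have hG := (contDiff_radialField (E := E) hh).differentiable two_ne_zero
  have hS : HasFDerivAt (fun y ↦ (ℝ ∙ ν)ᗮ.reflection y - d • ν)
      ((ℝ ∙ ν)ᗮ.reflection : E →L[ℝ] E) y :=
    ((ℝ ∙ ν)ᗮ.reflection : E →L[ℝ] E).hasFDerivAt.sub_const _
  have hI : HasFDerivAt (fun y ↦ y - d • ν) (.id ℝ E) y := (hasFDerivAt_id y).sub_const _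
  exact congrArg (· v)
    (((hG _).hasFDerivAt.comp y hS).fun_sub ((hG _).hasFDerivAt.comp y hI)).fderiv

lemma norm_coe_orthogonal_sub_smul_sq (hν : ‖ν‖ = 1) (d : ℝ) (z : (ℝ ∙ ν)ᗮ) :
    ‖(z : E) - d • ν‖ ^ 2 = d ^ 2 + ‖z‖ ^ 2 := by
  rw [norm_sub_sq_real, inner_smul_right, inner_coe_orthogonal_span_singleton, norm_smul, hν]
  simp [add_comm]

lemma norm_fderiv_reflectedField_coe_orthogonal {n : ℕ} {η : ℝ} {h : ℝ → ℝ}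
    (hh : IsRegularizedPower n η h) (hη : 0 < η) (hηd : η < d) (hν : ‖ν‖ = 1) (z : (ℝ ∙ ν)ᗮ) :
    ‖fderiv ℝ (reflectedField h ν d) z ν‖ = boundaryDensity n d ‖z‖ := by
  have hsq := norm_coe_orthogonal_sub_smul_sq hν d z
  have hz : η < ‖(z : E) - d • ν‖ := by
    refine hηd.trans_le (le_of_sq_le_sq ?_ (norm_nonneg _))
    nlinarith [sq_nonneg ‖z‖]
  have hinner : ⟪(z : E) - d • ν, ν⟫ ^ 2 = d ^ 2 := by
    simp [inner_sub_left, inner_smul_left, inner_coe_orthogonal_span_singleton, hν]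
  rw [fderiv_reflectedField_apply (hh.contDiff.of_le (by norm_num)),
    Submodule.reflection_mem_subspace_eq_self z.2,
    Submodule.reflection_orthogonalComplement_singleton_eq_neg, map_neg, ← neg_add',
    norm_neg, ← two_smul ℝ, norm_smul, hh.norm_fderiv_radialField_apply hη hz, hsq, hinner, hν,
    boundaryDensity]
  simp

variable {η : ℝ} {h : ℝ → ℝ}

lemma lt_norm_reflection_sub_smul (hν : ‖ν‖ = 1) (hηd : η < d) {y : E}
    (hy : y ∈ openHalfSpace ν) : η < ‖(ℝ ∙ ν)ᗮ.reflection y - d • ν‖ := by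
  have hy : 0 < ⟪y, ν⟫ := hy
  have hle := abs_real_inner_le_norm ((ℝ ∙ ν)ᗮ.reflection y - d • ν) ν
  rw [inner_sub_left, inner_reflection_orthogonal_span_singleton, inner_smul_left,
    real_inner_self_eq_norm_sq, hν] at hle
  simp only [conj_trivial, one_pow, mul_one] at hle
  linarith [neg_abs_le (-⟪y, ν⟫ - d)]

lemma laplacian_reflectedField [FiniteDimensional ℝ E]
    (hh : IsRegularizedPower (finrank ℝ E) η h) (hη : 0 < η) (hηd : η < d) (hν : ‖ν‖ = 1) {y : E}
    (hy : y ∈ openHalfSpace ν) :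
    Δ (reflectedField h ν d) y = -Δ (radialField h : E → E) (y - d • ν) := by
  have hG := contDiff_radialField (E := E) (hh.contDiff.of_le (by norm_num))
  have hGx : ContDiff ℝ 2 fun y : E ↦ radialField h (y + -(d • ν)) :=
    hG.comp (contDiff_id.add contDiff_const)
  have hGS : ContDiff ℝ 2 fun y : E ↦ radialField h ((ℝ ∙ ν)ᗮ.reflection y + -(d • ν)) :=
    hGx.comp (LinearIsometryEquiv.contDiff _)
  have hsplit : reflectedField h ν d
      = (fun y ↦ radialField h ((ℝ ∙ ν)ᗮ.reflection y + -(d • ν)))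
        - fun y ↦ radialField h (y + -(d • ν)) := by
    ext1 y
    simp only [reflectedField, Pi.sub_apply, sub_eq_add_neg]
  rw [hsplit, hGS.contDiffAt.laplacian_sub hGx.contDiffAt,
    laplacian_comp_linearIsometryEquiv hGx, laplacian_comp_add_right, laplacian_comp_add_right,
    ← sub_eq_add_neg, hh.laplacian_radialField_eq_zero hη (lt_norm_reflection_sub_smul hν hηd hy),
    zero_sub, ← sub_eq_add_neg]

end ReflectedField

section Cutoff

open InnerProductSpace Laplacian Module

variable {E F : Type*} [NormedAddCommGroup E] [InnerProductSpace ℝ E]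
  [NormedAddCommGroup F] [NormedSpace ℝ F] {R : ℝ}

/-- A smooth cutoff at scale `R`: equal to `1` on the ball of radius `R` about the origin and to `0`
outside the ball of radius `2 * R`. All scales dilate one fixed bump function, which makes the
derivative bounds uniform. -/
def cutoff (R : ℝ) (y : E) : ℝ :=
  (⟨1, 2, one_pos, one_lt_two⟩ : ContDiffBump (0 : E)) (R⁻¹ • y)

lemma contDiff_cutoff (R : ℝ) : ContDiff ℝ 2 (cutoff R : E → ℝ) :=
  (ContDiffBump.contDiff _).comp (contDiff_const_smul R⁻¹)

lemma norm_cutoff_le_one (R : ℝ) (y : E) : ‖cutoff R y‖ ≤ 1 := by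
  rw [cutoff, norm_of_nonneg (ContDiffBump.nonneg _)]
  exact ContDiffBump.le_one _

lemma cutoff_eq_one (hR : 0 < R) {y : E} (hy : ‖y‖ ≤ R) : cutoff R y = 1 := by
  refine ContDiffBump.one_of_mem_closedBall _ ?_
  rw [mem_closedBall_zero_iff, norm_smul, norm_inv, norm_of_nonneg hR.le]
  exact inv_mul_le_one_of_le₀ hy hR.le

lemma cutoff_eq_zero (hR : 0 < R) {y : E} (hy : 2 * R ≤ ‖y‖) : cutoff R y = 0 := by
  refine ContDiffBump.zero_of_le_dist _ ?_
  rw [dist_zero_right, norm_smul, norm_inv, norm_of_nonneg hR.le]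
  exact (le_inv_mul_iff₀ hR).2 (by rwa [mul_comm])

variable [FiniteDimensional ℝ E]

lemma hasCompactSupport_cutoff (hR : 0 < R) : HasCompactSupport (cutoff R : E → ℝ) :=
  .intro (isCompact_closedBall 0 (2 * R)) fun _ hy ↦
    cutoff_eq_zero hR (by simpa using (not_le.1 (mem_closedBall_zero_iff.not.1 hy)).le)

lemma exists_norm_fderiv_cutoff_le (E : Type*) [NormedAddCommGroup E] [InnerProductSpace ℝ E]
    [FiniteDimensional ℝ E] :
    ∃ C, ∀ R > 0, ∀ y : E, ‖fderiv ℝ (cutoff R) y‖ ≤ C / R := by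
  let φ : ContDiffBump (0 : E) := ⟨1, 2, one_pos, one_lt_two⟩
  obtain ⟨C, hC⟩ := (φ.hasCompactSupport.fderiv ℝ).exists_bound_of_continuous
    (φ.contDiff (n := 1).continuous_fderiv one_ne_zero)
  refine ⟨C, fun R hR y ↦ ?_⟩
  change ‖fderiv ℝ (fun y ↦ φ (R⁻¹ • y)) y‖ ≤ C / R
  rw [fderiv_comp_smul, norm_smul, norm_inv, norm_of_nonneg hR.le, div_eq_inv_mul]
  gcongr
  exact hC _

lemma exists_norm_laplacian_cutoff_le (E : Type*) [NormedAddCommGroup E] [InnerProductSpace ℝ E]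
    [FiniteDimensional ℝ E] :
    ∃ C, ∀ R > 0, ∀ y : E, ‖Δ (cutoff R : E → ℝ) y‖ ≤ C / R ^ 2 := by
  let φ : ContDiffBump (0 : E) := ⟨1, 2, one_pos, one_lt_two⟩
  obtain ⟨C, hC⟩ := (hasCompactSupport_laplacian φ.hasCompactSupport).exists_bound_of_continuous
    (continuous_laplacian φ.contDiff)
  refine ⟨C, fun R hR y ↦ ?_⟩
  change ‖Δ (fun y ↦ φ (R⁻¹ • y)) y‖ ≤ C / R ^ 2
  rw [laplacian_comp_const_smul _ φ.contDiff, norm_smul, norm_pow, norm_inv,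
    norm_of_nonneg hR.le, div_eq_inv_mul, inv_pow]
  gcongr
  exact hC _

lemma laplacian_cutoff_smul_of_norm_lt (f : E → F) (hR : 0 < R) {y : E} (hy : ‖y‖ < R) :
    Δ (fun y ↦ cutoff R y • f y) y = Δ f y := by
  refine (laplacian_congr_nhds ?_).eq_of_nhds
  filter_upwards [continuous_norm.continuousAt.eventually (Iio_mem_nhds hy)] with z hz
  rw [cutoff_eq_one hR (le_of_lt hz), one_smul]

lemma laplacian_cutoff_smul_of_lt_norm (f : E → F) (hR : 0 < R) {y : E} (hy : 2 * R < ‖y‖) :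
    Δ (fun y ↦ cutoff R y • f y) y = 0 := by
  have hzero : (fun y ↦ cutoff R y • f y) =ᶠ[nhds y] fun _ ↦ 0 := by
    filter_upwards [continuous_norm.continuousAt.eventually (Ioi_mem_nhds hy)] with z hz
    rw [cutoff_eq_zero hR (le_of_lt hz), zero_smul]
  rw [(laplacian_congr_nhds hzero).eq_of_nhds, laplacian_const]
  rfl

end Cutoff

section NewtonianDecay

variable {E F : Type*} [NormedAddCommGroup E] [NormedSpace ℝ E]
  [NormedAddCommGroup F] [NormedSpace ℝ F]

/-- Decay outside the ball of radius `R₀` like that of `y ↦ ‖y‖ ^ (-n) • y`, to first order. -/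
structure HasNewtonianDecay (n : ℕ) (R₀ A : ℝ) (f : E → F) : Prop where
  norm_le : ∀ y, R₀ ≤ ‖y‖ → ‖f y‖ ≤ A * ‖y‖ * (‖y‖ ^ n)⁻¹
  norm_fderiv_le : ∀ y, R₀ ≤ ‖y‖ → ‖fderiv ℝ f y‖ ≤ A * (‖y‖ ^ n)⁻¹

namespace HasNewtonianDecay

variable {n : ℕ} {R₀ A B : ℝ} {f g : E → F}

lemma sub (hf : HasNewtonianDecay n R₀ A f) (hg : HasNewtonianDecay n R₀ B g)
    (hf1 : Differentiable ℝ f) (hg1 : Differentiable ℝ g) :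
    HasNewtonianDecay n R₀ (A + B) (f - g) where
  norm_le y hy := by
    refine (norm_sub_le _ _).trans ((add_le_add (hf.norm_le y hy) (hg.norm_le y hy)).trans_eq ?_)
    ring
  norm_fderiv_le y hy := by
    rw [fderiv_sub (hf1 y) (hg1 y)]
    refine (norm_sub_le _ _).trans
      ((add_le_add (hf.norm_fderiv_le y hy) (hg.norm_fderiv_le y hy)).trans_eq ?_)
    ring

lemma comp_linearIsometryEquiv (hf : HasNewtonianDecay n R₀ A f) (S : E ≃ₗᵢ[ℝ] E) :
    HasNewtonianDecay n R₀ A (f ∘ S) where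
  norm_le y hy := by simpa using hf.norm_le (S y) (by simpa using hy)
  norm_fderiv_le y hy := by
    have hcomp : ‖fderiv ℝ (f ∘ S) y‖ = ‖fderiv ℝ f (S y)‖ :=
      (congrArg norm S.toContinuousLinearEquiv.comp_right_fderiv).trans
        (ContinuousLinearMap.opNorm_comp_linearIsometryEquiv _ S)
    simpa [hcomp] using hf.norm_fderiv_le (S y) (by simpa using hy)

end HasNewtonianDecay

end NewtonianDecay

section CutoffCommutator

open InnerProductSpace Laplacian Module

variable {E F : Type*} [NormedAddCommGroup E] [InnerProductSpace ℝ E] [FiniteDimensional ℝ E]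

lemma HasNewtonianDecay.exists_norm_laplacian_cutoff_smul_sub_le
    [NormedAddCommGroup F] [NormedSpace ℝ F] {n : ℕ} {R₀ A : ℝ} {f : E → F}
    (hf : HasNewtonianDecay n R₀ A f) (hf2 : ContDiff ℝ 2 f) :
    ∃ K, ∀ R > 0, R₀ ≤ R → ∀ y,
      ‖Δ (fun y ↦ cutoff R y • f y) y - cutoff R y • Δ f y‖ ≤ K * (R * R ^ n)⁻¹ := by
  obtain ⟨C₁, hC₁⟩ := exists_norm_fderiv_cutoff_le E
  obtain ⟨C₂, hC₂⟩ := exists_norm_laplacian_cutoff_le E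
  have hC₁0 : 0 ≤ C₁ := by simpa using (norm_nonneg _).trans (hC₁ 1 one_pos 0)
  have hC₂0 : 0 ≤ C₂ := by simpa using (norm_nonneg _).trans (hC₂ 1 one_pos 0)
  refine ⟨(2 * finrank ℝ E * C₁ + 2 * C₂) * |A|, fun R hR hR₀ y ↦ ?_⟩
  rcases lt_or_ge ‖y‖ R with hin | hRy
  · rw [laplacian_cutoff_smul_of_norm_lt f hR hin, cutoff_eq_one hR hin.le, one_smul, sub_self,
      norm_zero]
    positivity
  rcases lt_or_ge (2 * R) ‖y‖ with hout | hyR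
  · rw [laplacian_cutoff_smul_of_lt_norm f hR hout, cutoff_eq_zero hR hout.le, zero_smul, sub_self,
      norm_zero]
    positivity
  have hpow : (‖y‖ ^ n)⁻¹ ≤ (R ^ n)⁻¹ := by gcongr
  have hfy : ‖f y‖ ≤ |A| * (2 * R) * (R ^ n)⁻¹ := by
    refine (hf.norm_le y (hR₀.trans hRy)).trans ?_
    gcongr
    exact le_abs_self A
  have hdfy : ‖fderiv ℝ f y‖ ≤ |A| * (R ^ n)⁻¹ := by
    refine (hf.norm_fderiv_le y (hR₀.trans hRy)).trans ?_
    gcongr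
    exact le_abs_self A
  calc _ ≤ 2 * finrank ℝ E * ‖fderiv ℝ (cutoff R) y‖ * ‖fderiv ℝ f y‖
          + ‖Δ (cutoff R : E → ℝ) y‖ * ‖f y‖ :=
        norm_laplacian_smul_sub_le (contDiff_cutoff R) hf2 y
    _ ≤ 2 * finrank ℝ E * (C₁ / R) * (|A| * (R ^ n)⁻¹)
          + C₂ / R ^ 2 * (|A| * (2 * R) * (R ^ n)⁻¹) := by
        gcongr
        exacts [hC₁ R hR y, hC₂ R hR y]
    _ = _ := by field_simp

lemma HasNewtonianDecay.tendsto_setIntegral_inner_laplacian_cutoff_smul_sub [MeasurableSpace E]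
    [BorelSpace E] [NormedAddCommGroup F] [InnerProductSpace ℝ F] {R₀ A M : ℝ}
    {u f : E → F} {s : Set E} (hf : HasNewtonianDecay (finrank ℝ E) R₀ A f)
    (hf2 : ContDiff ℝ 2 f) (hs : MeasurableSet s) (hu : ∀ y ∈ s, ‖u y‖ ≤ M) :
    Tendsto (fun R ↦ ∫ y in s, ⟪u y, Δ (fun y ↦ cutoff R y • f y) y - cutoff R y • Δ f y⟫)
      atTop (nhds 0) := by
  obtain ⟨K, hK⟩ := hf.exists_norm_laplacian_cutoff_smul_sub_le hf2
  set n := finrank ℝ E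
  have hbound : ∀ᶠ R in atTop,
      ‖∫ y in s, ⟪u y, Δ (fun y ↦ cutoff R y • f y) y - cutoff R y • Δ f y⟫‖
        ≤ |M| * |K| * 2 ^ n * volume.real (ball (0 : E) 1) / R := by
    filter_upwards [eventually_gt_atTop 0, eventually_ge_atTop R₀] with R hR hR₀
    have hsupp (y : E) (hy : y ∈ s \ (s ∩ closedBall 0 (2 * R))) :
        ⟪u y, Δ (fun y ↦ cutoff R y • f y) y - cutoff R y • Δ f y⟫ = 0 := by
      have hout : 2 * R < ‖y‖ := not_le.1 fun hle ↦ hy.2 ⟨hy.1, mem_closedBall_zero_iff.2 hle⟩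
      simp [laplacian_cutoff_smul_of_lt_norm f hR hout, cutoff_eq_zero hR hout.le]
    have hpt (y : E) (hy : y ∈ s ∩ closedBall 0 (2 * R)) :
        ‖⟪u y, Δ (fun y ↦ cutoff R y • f y) y - cutoff R y • Δ f y⟫‖
          ≤ |M| * (|K| * (R * R ^ n)⁻¹) := by
      refine (norm_inner_le_norm _ _).trans ?_
      gcongr
      · exact (hu y hy.1).trans (le_abs_self M)
      · refine (hK R hR hR₀ y).trans ?_
        gcongr
        exact le_abs_self K
    have hvol : volume.real (s ∩ closedBall 0 (2 * R))
        ≤ (2 * R) ^ n * volume.real (ball (0 : E) 1) :=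
      (measureReal_mono Set.inter_subset_right measure_closedBall_lt_top.ne).trans_eq
        (Measure.addHaar_real_closedBall _ _ (by positivity))
    rw [setIntegral_eq_of_subset_of_forall_sdiff_eq_zero hs Set.inter_subset_left hsupp]
    calc _ ≤ |M| * (|K| * (R * R ^ n)⁻¹) * volume.real (s ∩ closedBall 0 (2 * R)) :=
          norm_setIntegral_le_of_norm_le_const
            ((measure_mono Set.inter_subset_right).trans_lt measure_closedBall_lt_top) hpt
      _ ≤ |M| * (|K| * (R * R ^ n)⁻¹) * ((2 * R) ^ n * volume.real (ball (0 : E) 1)) := by gcongr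
      _ = _ := by
          rw [mul_pow]
          field_simp
  exact squeeze_zero_norm' hbound (tendsto_const_nhds.div_atTop tendsto_id)

end CutoffCommutator

section ReflectedFieldDecay

variable {E : Type*} [NormedAddCommGroup E] [InnerProductSpace ℝ E] {ν : E} {n : ℕ} {d η : ℝ}
  {h : ℝ → ℝ}

lemma norm_sub_smul_mem_Icc (hν : ‖ν‖ = 1) (hd : 0 < d) {y : E} (hy : 2 * d ≤ ‖y‖) :
    ‖y - d • ν‖ ∈ Set.Icc (‖y‖ / 2) (2 * ‖y‖) := by
  have hdν : ‖d • ν‖ = d := by rw [norm_smul, hν, mul_one, norm_of_nonneg hd.le]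
  constructor
  · linarith [norm_sub_norm_le y (d • ν)]
  · linarith [norm_sub_le y (d • ν)]

lemma IsRegularizedPower.hasNewtonianDecay_radialField_sub_smul (hh : IsRegularizedPower n η h)
    (hη : 0 < η) (hηd : η < d) (hν : ‖ν‖ = 1) :
    HasNewtonianDecay n (2 * d) ((n + 1) * 2 ^ (n + 1)) fun y : E ↦ radialField h (y - d • ν) := by
  have hd : 0 < d := hη.trans hηd
  have hpow (y : E) (hy : 2 * d ≤ ‖y‖) : (‖y - d • ν‖ ^ n)⁻¹ ≤ 2 ^ n * (‖y‖ ^ n)⁻¹ := by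
    have hy0 : 0 < ‖y‖ := by linarith
    calc (‖y - d • ν‖ ^ n)⁻¹ ≤ ((‖y‖ / 2) ^ n)⁻¹ := by
          gcongr
          exact (norm_sub_smul_mem_Icc hν hd hy).1
      _ = 2 ^ n * (‖y‖ ^ n)⁻¹ := by rw [div_pow, inv_div, div_eq_mul_inv]
  have hlt (y : E) (hy : 2 * d ≤ ‖y‖) : η < ‖y - d • ν‖ := by
    linarith [(norm_sub_smul_mem_Icc hν hd hy).1]
  constructor
  · intro y hy
    rw [hh.norm_radialField hη (hlt y hy).le]
    calc _ ≤ 2 * ‖y‖ * (2 ^ n * (‖y‖ ^ n)⁻¹) := by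
          gcongr
          exacts [(norm_sub_smul_mem_Icc hν hd hy).2, hpow y hy]
      _ = 1 * 2 ^ (n + 1) * ‖y‖ * (‖y‖ ^ n)⁻¹ := by ring
      _ ≤ _ := by
          gcongr
          linarith [Nat.cast_nonneg (α := ℝ) n]
  · intro y hy
    rw [fderiv_comp_sub]
    calc _ ≤ (n + 1) * (‖y - d • ν‖ ^ n)⁻¹ := hh.norm_fderiv_radialField_le hη (hlt y hy)
      _ ≤ (n + 1) * (2 ^ n * (‖y‖ ^ n)⁻¹) := by
          gcongr
          exact hpow y hy
      _ ≤ (n + 1) * (2 ^ (n + 1) * (‖y‖ ^ n)⁻¹) := by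
          gcongr
          exacts [one_le_two, n.le_succ]
      _ = _ := by ring

lemma IsRegularizedPower.exists_hasNewtonianDecay_reflectedField (hh : IsRegularizedPower n η h)
    (hη : 0 < η) (hηd : η < d) (hν : ‖ν‖ = 1) :
    ∃ A, HasNewtonianDecay n (2 * d) A (reflectedField h ν d) := by
  have hdecay := hh.hasNewtonianDecay_radialField_sub_smul hη hηd hν
  have hdiff : Differentiable ℝ fun y : E ↦ radialField h (y - d • ν) :=
    ((contDiff_radialField (hh.contDiff.of_le (by norm_num))).differentiable two_ne_zero).comp
      (differentiable_id.sub_const _)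
  exact ⟨_, (hdecay.comp_linearIsometryEquiv (ℝ ∙ ν)ᗮ.reflection).sub hdecay
    (hdiff.comp (LinearIsometryEquiv.differentiable _)) hdiff⟩

end ReflectedFieldDecay

section Divergence

variable {E : Type*} [NormedAddCommGroup E] [InnerProductSpace ℝ E]

/-- The divergence of a vector field, as the trace of its derivative: a coordinate-free form of
`divg`. -/
def divergence (u : E → E) (x : E) : ℝ := LinearMap.trace ℝ E (fderiv ℝ u x)

lemma divergence_comp_add_right (u : E → E) (a x : E) :
    divergence (fun y ↦ u (y + a)) x = divergence u (x + a) := by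
  simp only [divergence, fderiv_comp_add_right]

lemma divergence_congr_of_eventuallyEq {u v : E → E} {x : E} (h : u =ᶠ[nhds x] v) :
    divergence u x = divergence v x := by
  simp only [divergence, h.fderiv_eq]

lemma divergence_eq_sum_inner {ι : Type*} [Fintype ι] (b : OrthonormalBasis ι ℝ E) (u : E → E)
    (x : E) : divergence u x = ∑ i, ⟪b i, fderiv ℝ u x (b i)⟫ :=
  LinearMap.trace_eq_sum_inner _ b

variable [FiniteDimensional ℝ E]

lemma continuous_divergence {u : E → E} (hu : ContDiff ℝ 1 u) : Continuous (divergence u) := by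
  rw [funext (divergence_eq_sum_inner (stdOrthonormalBasis ℝ E) u)]
  fun_prop

variable [MeasurableSpace E] [BorelSpace E]

theorem integral_mul_divergence {k : E → ℝ} {u : E → E} (hk : ContDiff ℝ 1 k)
    (hc : HasCompactSupport k) (hu : ContDiff ℝ 1 u) :
    ∫ y, k y * divergence u y = -∫ y, fderiv ℝ k y (u y) := by
  let b := stdOrthonormalBasis ℝ E
  have huc := hu.continuous
  have hkc := hk.continuous
  have hcoord (i) (y : E) : fderiv ℝ (fun y ↦ ⟪b i, u y⟫) y (b i) = ⟪b i, fderiv ℝ u y (b i)⟫ := by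
    simp [fderiv_inner_apply ℝ (differentiableAt_const _) (hu.differentiable one_ne_zero y)]
  have hint (i) : Integrable fun y ↦ k y * ⟪b i, fderiv ℝ u y (b i)⟫ :=
    Continuous.integrable_of_hasCompactSupport (by fun_prop) hc.mul_right
  have hint' (i) : Integrable fun y ↦ fderiv ℝ k y (b i) * ⟪b i, u y⟫ :=
    Continuous.integrable_of_hasCompactSupport (by fun_prop) (hc.fderiv_apply ℝ (b i)).mul_right
  have hparts (i) : ∫ y, k y * ⟪b i, fderiv ℝ u y (b i)⟫
      = -∫ y, fderiv ℝ k y (b i) * ⟪b i, u y⟫ := by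
    simp_rw [← hcoord]
    exact integral_mul_fderiv_eq_neg_fderiv_mul_of_integrable (hint' i)
      (by simpa only [hcoord] using hint i)
      (Continuous.integrable_of_hasCompactSupport (by fun_prop) hc.mul_right)
      (fun y _ ↦ hk.differentiable one_ne_zero y)
      (fun y _ ↦ (differentiableAt_const _).inner ℝ (hu.differentiable one_ne_zero y))
  have hexpand (y : E) : fderiv ℝ k y (u y) = ∑ i, fderiv ℝ k y (b i) * ⟪b i, u y⟫ := by
    conv_lhs => rw [← b.sum_repr' (u y)]
    simp [map_sum, mul_comm]
  simp_rw [divergence_eq_sum_inner b, Finset.mul_sum, hexpand]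
  rw [integral_finsetSum _ fun i _ ↦ hint i, integral_finsetSum _ fun i _ ↦ hint' i,
    ← Finset.sum_neg_distrib]
  exact Finset.sum_congr rfl fun i _ ↦ hparts i

end Divergence

section CutoffGreen

open InnerProductSpace Laplacian

variable {E F : Type*} [NormedAddCommGroup E] [InnerProductSpace ℝ E] [FiniteDimensional ℝ E]
  [MeasurableSpace E] [BorelSpace E] [NormedAddCommGroup F] [InnerProductSpace ℝ F] {ν : E} {R : ℝ}

lemma setIntegral_openHalfSpace_inner_laplacian_cutoff_smul {u f : E → F} (hν : ‖ν‖ = 1)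
    (hR : 0 < R) (hu : ContDiff ℝ 2 u) (hΔu : ∀ y ∈ openHalfSpace ν, Δ u y = 0)
    (hf : ContDiff ℝ 2 f) (hf0 : ∀ z : (ℝ ∙ ν)ᗮ, f z = 0) :
    ∫ y in openHalfSpace ν, ⟪u y, Δ (fun y ↦ cutoff R y • f y) y⟫
      = -∫ z : (ℝ ∙ ν)ᗮ, ⟪u z, cutoff R (z : E) • fderiv ℝ f z ν⟫ := by
  have hχ : ContDiff ℝ 2 (cutoff R : E → ℝ) := contDiff_cutoff R
  have hfderiv (z : (ℝ ∙ ν)ᗮ) :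
      fderiv ℝ (fun y ↦ cutoff R y • f y) z ν = cutoff R (z : E) • fderiv ℝ f z ν := by
    rw [fderiv_fun_smul (hχ.differentiable two_ne_zero _) (hf.differentiable two_ne_zero _)]
    simp [hf0]
  simp_rw [← hfderiv]
  exact setIntegral_openHalfSpace_inner_laplacian hν hu hΔu (hχ.smul hf)
    (hasCompactSupport_cutoff hR).smul_right fun z ↦ by simp [hf0]

lemma setIntegral_openHalfSpace_inner_cutoff_smul_laplacian {u f : E → F} (hν : ‖ν‖ = 1)
    (hR : 0 < R) (hu : ContDiff ℝ 2 u) (hΔu : ∀ y ∈ openHalfSpace ν, Δ u y = 0)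
    (hf : ContDiff ℝ 2 f) (hf0 : ∀ z : (ℝ ∙ ν)ᗮ, f z = 0) :
    ∫ y in openHalfSpace ν, ⟪u y, cutoff R y • Δ f y⟫
      = -(∫ z : (ℝ ∙ ν)ᗮ, ⟪u z, cutoff R (z : E) • fderiv ℝ f z ν⟫)
        - ∫ y in openHalfSpace ν, ⟪u y, Δ (fun y ↦ cutoff R y • f y) y - cutoff R y • Δ f y⟫ := by
  have hχ : ContDiff ℝ 2 (cutoff R : E → ℝ) := contDiff_cutoff R
  have hχs : HasCompactSupport (cutoff R : E → ℝ) := hasCompactSupport_cutoff hR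
  have hχc := hχ.continuous
  have huc := hu.continuous
  have hΔf := continuous_laplacian hf
  have hΔχf : Continuous (Δ fun y ↦ cutoff R y • f y) := continuous_laplacian (hχ.smul hf)
  have hΔχfs : HasCompactSupport (Δ fun y ↦ cutoff R y • f y) :=
    hasCompactSupport_laplacian hχs.smul_right
  have hint : Integrable fun y ↦ ⟪u y, cutoff R y • Δ f y⟫ :=
    Continuous.integrable_of_hasCompactSupport (by fun_prop) <|
      hχs.mono fun y hy hzero ↦ hy (by simp [hzero])
  have hint' : Integrable fun y ↦ ⟪u y, Δ (fun y ↦ cutoff R y • f y) y⟫ :=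
    Continuous.integrable_of_hasCompactSupport (huc.inner hΔχf) <|
      hΔχfs.mono fun y hy hzero ↦ hy (by simp [hzero])
  simp_rw [inner_sub_right]
  rw [integral_sub hint'.integrableOn hint.integrableOn,
    setIntegral_openHalfSpace_inner_laplacian_cutoff_smul hν hR hu hΔu hf hf0]
  ring

end CutoffGreen

section HalfSpaceRepresentation

open InnerProductSpace Laplacian Module

variable {E : Type*} [NormedAddCommGroup E] [InnerProductSpace ℝ E] {ν : E}
  {d η R M : ℝ} {h : ℝ → ℝ} {u : E → E}

namespace IsRegularizedPower

lemma contDiff_radialDivergence_norm_sub_sq (hh : IsRegularizedPower (finrank ℝ E) η h) (x : E) :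
    ContDiff ℝ 2 fun y : E ↦ radialDivergence (finrank ℝ E) h (‖y - x‖ ^ 2) :=
  (contDiff_radialDivergence _ hh.contDiff).comp ((contDiff_id.sub contDiff_const).norm_sq ℝ)

lemma radialDivergence_norm_sub_sq_eq_zero (hh : IsRegularizedPower (finrank ℝ E) η h)
    (hη : 0 < η) {x y : E} (hy : η < ‖y - x‖) :
    radialDivergence (finrank ℝ E) h (‖y - x‖ ^ 2) = 0 :=
  hh.radialDivergence_eq_zero (by gcongr)

variable [FiniteDimensional ℝ E]

lemma hasCompactSupport_radialDivergence_norm_sub_sq (hh : IsRegularizedPower (finrank ℝ E) η h)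
    (hη : 0 < η) (x : E) :
    HasCompactSupport fun y : E ↦ radialDivergence (finrank ℝ E) h (‖y - x‖ ^ 2) :=
  .intro (isCompact_closedBall x η) fun _ hy ↦
    hh.radialDivergence_norm_sub_sq_eq_zero hη (not_le.1 (mem_closedBall_iff_norm.not.1 hy))

lemma cutoff_smul_laplacian_reflectedField (hh : IsRegularizedPower (finrank ℝ E) η h)
    (hη : 0 < η) (hηd : η < d) (hν : ‖ν‖ = 1) (hR : 2 * d ≤ R) {y : E}
    (hy : y ∈ openHalfSpace ν) :
    cutoff R y • Δ (reflectedField h ν d) y = Δ (reflectedField h ν d) y := by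
  have hd : 0 < d := hη.trans hηd
  rcases le_or_gt ‖y‖ R with hle | hlt
  · rw [cutoff_eq_one (by linarith) hle, one_smul]
  · have hfar : η < ‖y - d • ν‖ := by
      linarith [(norm_sub_smul_mem_Icc hν hd (hR.trans hlt.le)).1]
    rw [laplacian_reflectedField hh hη hηd hν hy, hh.laplacian_radialField_eq_zero hη hfar,
      neg_zero, smul_zero]

variable [MeasurableSpace E] [BorelSpace E]

lemma integral_radialDivergence_mul_divergence (hh : IsRegularizedPower (finrank ℝ E) η h)
    (hη : 0 < η) (hηd : η < d) (hν : ‖ν‖ = 1) (hu : ContDiff ℝ 1 u) :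
    ∫ y, radialDivergence (finrank ℝ E) h (‖y - d • ν‖ ^ 2) * divergence u y
      = ∫ y in openHalfSpace ν, ⟪u y, Δ (reflectedField h ν d) y⟫ := by
  have hgrad (y v : E) :
      fderiv ℝ (fun y ↦ radialDivergence (finrank ℝ E) h (‖y - d • ν‖ ^ 2)) y v
        = ⟪v, Δ (radialField h : E → E) (y - d • ν)⟫ := by
    rw [fderiv_comp_sub (f := fun y : E ↦ radialDivergence (finrank ℝ E) h (‖y‖ ^ 2)),
      fderiv_radialDivergence_norm_sq_apply hh.contDiff]
  have hsupp (y : E) (hy : y ∉ openHalfSpace ν) :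
      ⟪u y, Δ (radialField h : E → E) (y - d • ν)⟫ = 0 := by
    have hy : ⟪y, ν⟫ ≤ 0 := not_lt.1 hy
    have hfar : d ≤ ‖y - d • ν‖ := by
      have hle := abs_real_inner_le_norm (y - d • ν) ν
      rw [inner_sub_left, real_inner_smul_left, real_inner_self_eq_norm_sq, hν] at hle
      linarith [neg_abs_le (⟪y, ν⟫ - d * 1 ^ 2)]
    rw [hh.laplacian_radialField_eq_zero hη (hηd.trans_le hfar), inner_zero_right]
  rw [integral_mul_divergence ((hh.contDiff_radialDivergence_norm_sub_sq _).of_le one_le_two)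
    (hh.hasCompactSupport_radialDivergence_norm_sub_sq hη _) hu]
  simp_rw [hgrad]
  rw [← setIntegral_eq_integral_of_forall_compl_eq_zero hsupp, ← integral_neg]
  refine setIntegral_congr_fun (isOpen_openHalfSpace ν).measurableSet fun y hy ↦ ?_
  rw [laplacian_reflectedField hh hη hηd hν hy, inner_neg_right]

lemma norm_integral_orthogonal_inner_cutoff_smul_le (hh : IsRegularizedPower (finrank ℝ E) η h)
    (hE : 2 ≤ finrank ℝ E) (hη : 0 < η) (hηd : η < d) (hν : ‖ν‖ = 1) (R : ℝ)
    (hu : ∀ z : (ℝ ∙ ν)ᗮ, ‖u z‖ ≤ M) :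
    ‖∫ z : (ℝ ∙ ν)ᗮ, ⟪u z, cutoff R (z : E) • fderiv ℝ (reflectedField h ν d) z ν⟫‖
      ≤ M * (sphereArea (finrank ℝ E) * (Dconst (finrank ℝ E) / d)) := by
  have hν0 : ν ≠ 0 := norm_ne_zero_iff.1 (by simp [hν])
  have hrank : finrank ℝ (ℝ ∙ ν)ᗮ + 1 = finrank ℝ E := by
    rw [← (ℝ ∙ ν).finrank_add_finrank_orthogonal, finrank_span_singleton hν0, add_comm]
  have : Nontrivial (ℝ ∙ ν)ᗮ := finrank_pos_iff.1 (by omega : 0 < finrank ℝ (ℝ ∙ ν)ᗮ)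
  have hd : 0 < d := hη.trans hηd
  rw [← integral_boundaryDensity_norm hrank hd, ← integral_const_mul]
  refine norm_integral_le_of_norm_le ((integrable_boundaryDensity_norm hrank hd).const_mul M) ?_
  filter_upwards with z
  have hχ := norm_cutoff_le_one R (z : E)
  rw [← norm_fderiv_reflectedField_coe_orthogonal hh hη hηd hν z]
  calc _ ≤ ‖u z‖ * (‖cutoff R (z : E)‖ * ‖fderiv ℝ (reflectedField h ν d) z ν‖) := by
        rw [← norm_smul]
        exact norm_inner_le_norm _ _
    _ ≤ M * (1 * ‖fderiv ℝ (reflectedField h ν d) z ν‖) := by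
        gcongr
        exacts [(norm_nonneg _).trans (hu z), hu z]
    _ = _ := by rw [one_mul]

theorem abs_integral_radialDivergence_mul_divergence_le (hh : IsRegularizedPower (finrank ℝ E) η h)
    (hE : 2 ≤ finrank ℝ E) (hη : 0 < η) (hηd : η < d) (hν : ‖ν‖ = 1) (hu : ContDiff ℝ 2 u)
    (hΔu : ∀ y ∈ openHalfSpace ν, Δ u y = 0) (huM : ∀ y, 0 ≤ ⟪y, ν⟫ → ‖u y‖ ≤ M) :
    |∫ y, radialDivergence (finrank ℝ E) h (‖y - d • ν‖ ^ 2) * divergence u y|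
      ≤ M * (sphereArea (finrank ℝ E) * (Dconst (finrank ℝ E) / d)) := by
  have hF : ContDiff ℝ 2 (reflectedField h ν d) :=
    contDiff_reflectedField (hh.contDiff.of_le (by norm_num)) ν d
  obtain ⟨A, hdecay⟩ := hh.exists_hasNewtonianDecay_reflectedField hη hηd hν
  have herror := hdecay.tendsto_setIntegral_inner_laplacian_cutoff_smul_sub hF
    (isOpen_openHalfSpace ν).measurableSet fun y hy ↦ huM y (le_of_lt hy)
  have hbound := herror.norm.const_add
    (M * (sphereArea (finrank ℝ E) * (Dconst (finrank ℝ E) / d)))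
  rw [norm_zero, add_zero] at hbound
  refine ge_of_tendsto hbound ?_
  filter_upwards [eventually_ge_atTop (2 * d)] with R hR
  have hR0 : 0 < R := by linarith
  rw [hh.integral_radialDivergence_mul_divergence hη hηd hν (hu.of_le one_le_two),
    ← setIntegral_congr_fun (isOpen_openHalfSpace ν).measurableSet fun y hy ↦
      congrArg (inner ℝ (u y)) (hh.cutoff_smul_laplacian_reflectedField hη hηd hν hR hy),
    setIntegral_openHalfSpace_inner_cutoff_smul_laplacian hν hR0 hu hΔu hF
      (reflectedField_coe_orthogonal h d), ← norm_eq_abs]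
  refine (norm_sub_le _ _).trans ?_
  rw [norm_neg]
  gcongr
  exact hh.norm_integral_orthogonal_inner_cutoff_smul_le hE hη hηd hν R fun z ↦
    huM z (inner_coe_orthogonal_span_singleton ν z).ge

end IsRegularizedPower

end HalfSpaceRepresentation

section HalfSpaceBound

open InnerProductSpace Laplacian Module

variable {E : Type*} [NormedAddCommGroup E] [InnerProductSpace ℝ E] [FiniteDimensional ℝ E]

lemma abs_integral_mul_sub_integral_mul_le [MeasurableSpace E] [BorelSpace E] {k g : E → ℝ}
    {x : E} {η ε : ℝ} (hk : Continuous k) (hk0 : ∀ y, 0 ≤ k y) (hkη : ∀ y, η < ‖y - x‖ → k y = 0)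
    (hg : Continuous g) (hgε : ∀ y, ‖y - x‖ ≤ η → |g y - g x| ≤ ε) :
    |(∫ y, k y * g y) - (∫ y, k y) * g x| ≤ (∫ y, k y) * ε := by
  have hc : HasCompactSupport k := .intro (isCompact_closedBall x η) fun y hy ↦
    hkη y (not_le.1 (mem_closedBall_iff_norm.not.1 hy))
  have hki : Integrable k := hk.integrable_of_hasCompactSupport hc
  have hkgi : Integrable fun y ↦ k y * g y :=
    (hk.mul hg).integrable_of_hasCompactSupport hc.mul_right
  rw [← integral_mul_const, ← integral_mul_const, ← integral_sub hkgi (hki.mul_const _),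
    ← norm_eq_abs]
  refine norm_integral_le_of_norm_le (hki.mul_const ε) (.of_forall fun y ↦ ?_)
  rw [← mul_sub, norm_mul, norm_of_nonneg (hk0 y)]
  rcases le_or_gt ‖y - x‖ η with hle | hlt
  · exact mul_le_mul_of_nonneg_left (hgε y hle) (hk0 y)
  · simp [hkη y hlt]

variable {ν : E} {d M : ℝ} {u : E → E}

theorem abs_divergence_smul_le_of_contDiff (hE : 2 ≤ finrank ℝ E) (hd : 0 < d) (hν : ‖ν‖ = 1)
    (hu : ContDiff ℝ 2 u) (hΔu : ∀ y ∈ openHalfSpace ν, Δ u y = 0)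
    (huM : ∀ y, 0 ≤ ⟪y, ν⟫ → ‖u y‖ ≤ M) :
    |divergence u (d • ν)| ≤ Dconst (finrank ℝ E) / d * M := by
  borelize E
  have : Nontrivial E := finrank_pos_iff.1 (by omega : 0 < finrank ℝ E)
  have hω : 0 < sphereArea (finrank ℝ E) := sphereArea_pos (by omega)
  have hdiv : Continuous (divergence u) := continuous_divergence (hu.of_le one_le_two)
  refine le_of_forall_pos_le_add fun ε hε ↦ ?_
  obtain ⟨δ, hδ, hδε⟩ := Metric.continuous_iff.1 hdiv (d • ν) ε hε
  obtain ⟨η, hη, hηmin⟩ := exists_between (lt_min hd hδ)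
  obtain ⟨hηd, hηδ⟩ := lt_min_iff.1 hηmin
  obtain ⟨h, hh⟩ := exists_isRegularizedPower (finrank ℝ E) hη
  have happrox := abs_integral_mul_sub_integral_mul_le (x := d • ν) (η := η) (ε := ε)
    (hh.contDiff_radialDivergence_norm_sub_sq (d • ν)).continuous
    (fun y ↦ hh.nonneg _ (sq_nonneg _))
    (fun y hy ↦ hh.radialDivergence_norm_sub_sq_eq_zero hη hy) hdiv
    (fun y hy ↦ (hδε y (by rw [dist_eq_norm]; linarith)).le)
  have hint := hh.abs_integral_radialDivergence_mul_divergence_le hE hη hηd hν hu hΔu huM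
  rw [hh.integral_radialDivergence hη] at happrox
  refine le_of_mul_le_mul_left ?_ hω
  calc sphereArea (finrank ℝ E) * |divergence u (d • ν)|
      = |sphereArea (finrank ℝ E) * divergence u (d • ν)| := by rw [abs_mul, abs_of_pos hω]
    _ ≤ M * (sphereArea (finrank ℝ E) * (Dconst (finrank ℝ E) / d))
          + sphereArea (finrank ℝ E) * ε := by
        linarith [abs_sub_abs_le_abs_sub (sphereArea (finrank ℝ E) * divergence u (d • ν))
          (∫ y, radialDivergence (finrank ℝ E) h (‖y - d • ν‖ ^ 2) * divergence u y),
          abs_sub_comm (sphereArea (finrank ℝ E) * divergence u (d • ν))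
          (∫ y, radialDivergence (finrank ℝ E) h (‖y - d • ν‖ ^ 2) * divergence u y)]
    _ = _ := by ring

end HalfSpaceBound

section SmoothExtension

variable {E F : Type*} [NormedAddCommGroup E] [InnerProductSpace ℝ E] [NormedAddCommGroup F]
  [NormedSpace ℝ F]

lemma exists_contDiff_eqOn_halfSpace {k : ℕ∞} {f : E → F} {ν : E} {a b : ℝ} (hab : a < b)
    (hf : ContDiffOn ℝ k f {y | a < ⟪y, ν⟫}) :
    ∃ g : E → F, ContDiff ℝ k g ∧ Set.EqOn g f {y | b ≤ ⟪y, ν⟫} := by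
  obtain ⟨m, ham, hmb⟩ := exists_between hab
  let ψ (y : E) : ℝ := smoothTransition ((⟪y, ν⟫ - m) / (b - m))
  have hinner : Continuous fun y ↦ ⟪y, ν⟫ := by fun_prop
  have hψ : ContDiff ℝ k ψ := smoothTransition.contDiff.comp
    (((contDiff_id.inner ℝ contDiff_const).sub contDiff_const).div_const _)
  have hψ0 (y : E) (hy : ⟪y, ν⟫ ≤ m) : ψ y = 0 := smoothTransition.zero_of_nonpos <|
    div_nonpos_of_nonpos_of_nonneg (by linarith) (by linarith)
  have hψ1 (y : E) (hy : b ≤ ⟪y, ν⟫) : ψ y = 1 := smoothTransition.one_of_one_le <|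
    (one_le_div (by linarith)).2 (by linarith)
  refine ⟨fun y ↦ ψ y • f y, contDiff_iff_contDiffAt.2 fun y ↦ ?_, fun y hy ↦ by simp [hψ1 y hy]⟩
  rcases lt_or_ge a ⟪y, ν⟫ with hy | hy
  · exact hψ.contDiffAt.smul
      (hf.contDiffAt ((isOpen_lt continuous_const hinner).mem_nhds hy))
  · refine contDiffAt_const (c := 0) |>.congr_of_eventuallyEq ?_
    filter_upwards [(isOpen_lt hinner continuous_const).mem_nhds (hy.trans_lt ham)] with z hz
    rw [hψ0 z (le_of_lt hz), zero_smul]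

end SmoothExtension

section HalfSpaceHarmonic

open InnerProductSpace Laplacian Module

variable {E : Type*} [NormedAddCommGroup E] [InnerProductSpace ℝ E] [FiniteDimensional ℝ E]
  {ν : E} {d δ M : ℝ} {u : E → E}

lemma abs_divergence_smul_le_of_lt (hE : 2 ≤ finrank ℝ E) (hd : 0 < d) (hdδ : d < δ)
    (hν : ‖ν‖ = 1) (hu : ContDiffOn ℝ 2 u (openHalfSpace ν))
    (hΔu : ∀ y ∈ openHalfSpace ν, Δ u y = 0) (huM : ∀ y ∈ openHalfSpace ν, ‖u y‖ ≤ M) :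
    |divergence u (δ • ν)| ≤ Dconst (finrank ℝ E) / d * M := by
  let c := δ - d
  have hc : 0 < c := sub_pos.2 hdδ
  have hinner (y : E) : ⟪y + c • ν, ν⟫ = ⟪y, ν⟫ + c := by
    rw [inner_add_left, real_inner_smul_left, real_inner_self_eq_norm_sq, hν, one_pow, mul_one]
  have hmem (y : E) (hy : -c < ⟪y, ν⟫) : y + c • ν ∈ openHalfSpace ν := by
    change 0 < ⟪y + c • ν, ν⟫
    linarith [hinner y]
  obtain ⟨v, hv, hvu⟩ := exists_contDiff_eqOn_halfSpace (k := 2) (ν := ν)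
    (neg_lt_neg (half_lt_self hc)) (hu.comp (contDiff_id.add contDiff_const).contDiffOn hmem)
  have hvu_nhds (y : E) (hy : 0 ≤ ⟪y, ν⟫) : v =ᶠ[nhds y] fun y ↦ u (y + c • ν) := by
    have hopen : IsOpen {y : E | -(c / 2) < ⟪y, ν⟫} := isOpen_lt continuous_const (by fun_prop)
    filter_upwards [hopen.mem_nhds (show -(c / 2) < ⟪y, ν⟫ by linarith)] with z hz
    exact hvu (le_of_lt hz)
  have hdν : 0 ≤ ⟪d • ν, ν⟫ := by
    rw [real_inner_smul_left, real_inner_self_eq_norm_sq]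
    positivity
  have hδ : d • ν + c • ν = δ • ν := by rw [← add_smul, add_sub_cancel]
  rw [← hδ, ← divergence_comp_add_right, ← divergence_congr_of_eventuallyEq (hvu_nhds _ hdν)]
  refine abs_divergence_smul_le_of_contDiff hE hd hν hv (fun y hy ↦ ?_) fun y hy ↦ ?_
  · rw [(laplacian_congr_nhds (hvu_nhds y (le_of_lt hy))).eq_of_nhds, laplacian_comp_add_right]
    exact hΔu _ (hmem y (by linarith [show 0 < ⟪y, ν⟫ from hy]))
  · rw [(hvu_nhds y hy).eq_of_nhds]
    exact huM _ (hmem y (by linarith))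

theorem abs_divergence_smul_le (hE : 2 ≤ finrank ℝ E) (hδ : 0 < δ) (hν : ‖ν‖ = 1)
    (hu : ContDiffOn ℝ 2 u (openHalfSpace ν)) (hΔu : ∀ y ∈ openHalfSpace ν, Δ u y = 0)
    (huM : ∀ y ∈ openHalfSpace ν, ‖u y‖ ≤ M) :
    |divergence u (δ • ν)| ≤ Dconst (finrank ℝ E) / δ * M := by
  have hcont : Tendsto (fun d ↦ Dconst (finrank ℝ E) / d * M) (nhdsWithin δ (Set.Iio δ))
      (nhds (Dconst (finrank ℝ E) / δ * M)) :=
    ((continuousAt_const.div continuousAt_id hδ.ne').mul continuousAt_const).tendsto.mono_left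
      nhdsWithin_le_nhds
  refine ge_of_tendsto hcont ?_
  filter_upwards [Ioo_mem_nhdsLT hδ] with d hd
  exact abs_divergence_smul_le_of_lt hE hd.1 hd.2 hν hu hΔu huM

end HalfSpaceHarmonic

section ConvexComplement

open InnerProductSpace Module

lemma infDist_frontier_eq_infDist {E : Type*} [NormedAddCommGroup E] [NormedSpace ℝ E]
    [FiniteDimensional ℝ E] {K : Set E} (hK : IsClosed K) (hne : K.Nonempty) {x : E} (hx : x ∉ K) :
    infDist x (frontier K) = infDist x K := by
  obtain ⟨p, hp, hxp⟩ := exists_mem_frontier_infDist_compl_eq_dist (s := Kᶜ) hx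
    (Set.compl_ne_univ.2 hne)
  rw [frontier_compl] at hp
  rw [compl_compl] at hxp
  exact ((infDist_le_dist_of_mem hp).trans_eq hxp.symm).antisymm
    (infDist_le_infDist_of_subset hK.frontier_subset ⟨p, hp⟩)

variable {E : Type*} [NormedAddCommGroup E] [InnerProductSpace ℝ E]

lemma exists_supporting_halfSpace {K : Set E} (hK : IsComplete K) (hKc : Convex ℝ K)
    (hne : K.Nonempty) {x : E} (hx : x ∉ K) :
    ∃ p ν : E, ‖ν‖ = 1 ∧ infDist x K • ν + p = x ∧ ∀ y ∈ openHalfSpace ν, y + p ∉ K := by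
  obtain ⟨p, hpK, hp⟩ := exists_norm_eq_iInf_of_complete_convex hne hK hKc x
  have hpos : 0 < ‖x - p‖ := norm_pos_iff.2 (sub_ne_zero.2 fun h ↦ hx (h ▸ hpK))
  have hdist : infDist x K = ‖x - p‖ := by
    simp only [hp, infDist_eq_iInf, dist_eq_norm]
  refine ⟨p, ‖x - p‖⁻¹ • (x - p), norm_smul_inv_norm (norm_pos_iff.1 hpos), ?_,
    fun y hy hyK ↦ ?_⟩
  · rw [hdist, smul_inv_smul₀ hpos.ne', sub_add_cancel]
  · have hobtuse := (norm_eq_iInf_iff_real_inner_le_zero hKc hpK).1 hp _ hyK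
    rw [add_sub_cancel_right, real_inner_comm] at hobtuse
    have hpos' : 0 < ‖x - p‖⁻¹ * ⟪y, x - p⟫ := by
      simpa only [openHalfSpace, Set.mem_ofPred_eq, real_inner_smul_right] using hy
    exact hpos'.not_ge (mul_nonpos_of_nonneg_of_nonpos (inv_nonneg.2 hpos.le) hobtuse)

variable [FiniteDimensional ℝ E]

theorem divergence_bound_complement_convex_general (hE : 2 ≤ finrank ℝ E) {K : Set E}
    (hK : IsClosed K) (hKc : Convex ℝ K) (hne : K.Nonempty) {u : E → E} {M : ℝ}
    (hu : HarmonicOnNhd u Kᶜ) (huM : ∀ y ∈ Kᶜ, ‖u y‖ ≤ M) {x : E} (hx : x ∈ Kᶜ) :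
    |divergence u x| ≤ Dconst (finrank ℝ E) / infDist x (frontier Kᶜ) * M := by
  obtain ⟨p, ν, hν, hxp, hsupp⟩ := exists_supporting_halfSpace hK.isComplete hKc hne hx
  have hbound := abs_divergence_smul_le (u := fun y ↦ u (y + p)) hE
    ((hK.notMem_iff_infDist_pos hne).1 hx) hν
    (fun y hy ↦ ((hu _ (hsupp y hy)).1.comp y (by fun_prop)).contDiffWithinAt)
    (fun y hy ↦ (laplacian_comp_add_right u p y).trans (hu _ (hsupp y hy)).2.eq_of_nhds)
    (fun y hy ↦ huM _ (hsupp y hy))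
  rwa [divergence_comp_add_right, hxp, ← infDist_frontier_eq_infDist hK hne hx,
    ← frontier_compl] at hbound

end ConvexComplement

section Coordinates

open InnerProductSpace Laplacian

variable {n : ℕ} {u : Eu n → Eu n} {Ω : Set (Eu n)} {x : Eu n}

lemma laplacian_eq_zero_of_isHarmonicOn {f : Eu n → ℝ} (hΩ : IsOpen Ω) (hf : IsHarmonicOn f Ω)
    (hx : x ∈ Ω) : Δ f x = 0 := by
  have hfx : ContDiffAt ℝ 2 f x := hf.1.contDiffAt (hΩ.mem_nhds hx)
  rw [laplacian_eq_sum_fderiv_fderiv (EuclideanSpace.basisFun (Fin n) ℝ), ← hf.2 x hx]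
  refine Finset.sum_congr rfl fun i _ ↦ ?_
  rw [EuclideanSpace.basisFun_apply, fderiv_fderiv_apply hfx]

lemma harmonicOnNhd_of_isHarmonicOn_apply (hΩ : IsOpen Ω)
    (hu : ∀ j, IsHarmonicOn (fun y ↦ u y j) Ω) : HarmonicOnNhd u Ω := by
  have hcd (y) (hy : y ∈ Ω) : ContDiffAt ℝ 2 u y :=
    contDiffAt_euclidean.2 fun j ↦ (hu j).1.contDiffAt (hΩ.mem_nhds hy)
  refine fun x hx ↦ ⟨hcd x hx, ?_⟩
  filter_upwards [hΩ.mem_nhds hx] with y hy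
  ext j
  exact ((hcd y hy).laplacian_CLM_comp_left (l := EuclideanSpace.proj j)).symm.trans
    (laplacian_eq_zero_of_isHarmonicOn hΩ (hu j) hy)

lemma divg_eq_divergence (hu : DifferentiableAt ℝ u x) : divg u x = divergence u x := by
  rw [divg, divergence_eq_sum_inner (EuclideanSpace.basisFun (Fin n) ℝ)]
  refine Finset.sum_congr rfl fun j _ ↦ ?_
  have hcoord : HasFDerivAt (fun y ↦ u y j) ((EuclideanSpace.proj j).comp (fderiv ℝ u x)) x :=
    (EuclideanSpace.proj (𝕜 := ℝ) j).hasFDerivAt.comp x hu.hasFDerivAt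
  simp [hcoord.fderiv, EuclideanSpace.inner_single_left]

end Coordinates

/-- Let `n ≥ 2` and `Ω = ℝⁿ \ Ḡ` with `G` a convex domain in `ℝⁿ`.
If `u : Ω → ℝⁿ` is a vector field with bounded harmonic components (say `|u| ≤ M`
on `Ω`), then for every `x ∈ Ω`,
`|div u(x)| ≤ (D_n / d_x) · sup_Ω |u| ≤ (D_n / d_x) · M`. -/
theorem divergence_bound_complement_convex
    (n : ℕ) (hn : 2 ≤ n) (G Ω : Set (Eu n))
    (hGo : IsOpen G) (hGc : Convex ℝ G) (hGne : G.Nonempty)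
    (hΩ : Ω = (closure G)ᶜ)
    (u : Eu n → Eu n) (hu : ∀ j : Fin n, IsHarmonicOn (fun y => u y j) Ω)
    (M : ℝ) (hM : ∀ y ∈ Ω, ‖u y‖ ≤ M)
    (x : Eu n) (hx : x ∈ Ω) :
    |divg u x| ≤ Dconst n / Metric.infDist x (frontier Ω) * M := by
  subst hΩ
  have hharm := harmonicOnNhd_of_isHarmonicOn_apply isClosed_closure.isOpen_compl hu
  rw [divg_eq_divergence ((hharm x hx).1.differentiableAt two_ne_zero)]
  simpa using divergence_bound_complement_convex_general (by simpa using hn) isClosed_closure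
    hGc.closure hGne.closure hharm hM hx
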